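/- arXiv:2501.07177 — 4 statements merged into one kernel-verified Lean document; each statement's English description precedes it below -/
import Mathlib

section
/- Descent equations on the lattice: Let D ≥ 1, let r ≥ 1 and 1 ≤ k ≤ r, and let A_0, …, A_k be lattice 1-forms on ℤ^D. Set F_i = dA_i and η^{i,j} = A_i − A_j, and define the (2r−k)-form Q_r^{(k)}(A_0,…,A_k) = Σ_{m_0+⋯+m_k = r−k, m_i ∈ ℕ} F_0^{m_0} ∧ η^{1,0} ∧ F_1^{m_1} ∧ η^{2,1} ∧ ⋯ ∧ η^{k,k−1} ∧ F_k^{m_k} (powers are iterated noncommutative wedge products, the empty product is omitted). Then d Q_r^{(k)}(A_0,…,A_k) = Σ_{i=0}^{k} (−1)^i Q_r^{(k−1)}(A_0,…,Â_i,…,A_k), where Â_i means that the argument A_i is omitted. -/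
open scoped BigOperators

/-- A site of the hypercubic lattice `ℤ^D`. -/
abbrev Site (D : ℕ) := Fin D → ℤ

/-- The coefficient function of a lattice form on `ℤ^D`: to each site it assigns a
real coefficient depending on a sequence of direction indices (a `k`-form only
uses the first `k` indices). -/
abbrev Coeff (D : ℕ) := Site D → (ℕ → Fin D) → ℝ

/-- Shift a site by the `μ`-th standard basis vector `ê_μ`. -/
def shiftSite {D : ℕ} (n : Site D) (μ : Fin D) : Site D :=
  fun ν => n ν + if ν = μ then 1 else 0

/-- Forward difference operator `(Δ_μ f)(n) = f(n + ê_μ) - f(n)`. -/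
def fdiff {D : ℕ} (μ : Fin D) (f : Site D → ℝ) (n : Site D) : ℝ :=
  f (shiftSite n μ) - f n

/-- Shift a site by `ê_{μ 0} + ê_{μ 1} + ⋯ + ê_{μ (k-1)}`. -/
def multiShift {D : ℕ} (k : ℕ) (n : Site D) (μ : ℕ → Fin D) : Site D :=
  fun ν => n ν + ∑ i ∈ Finset.range k, (if ν = μ i then 1 else 0)

/-- Antisymmetrization of a coefficient function over its first `k` indices. -/
noncomputable def alt {D : ℕ} (k : ℕ) (c : Coeff D) : Coeff D :=
  fun n μ => ((k.factorial : ℝ))⁻¹ *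
    ∑ σ : Equiv.Perm (Fin k), ((Equiv.Perm.sign σ : ℤ) : ℝ) *
      c n (fun i => if h : i < k then μ ↑(σ ⟨i, h⟩) else μ i)

/-- The lattice exterior derivative of a `k`-form: the antisymmetrization over all
`k+1` indices of `Δ_μ ω_{μ₁⋯μ_k}(n)`. -/
noncomputable def extd {D : ℕ} (k : ℕ) (ω : Coeff D) : Coeff D :=
  alt (k+1) (fun n μ => fdiff (μ 0) (fun x => ω x (fun i => μ (i+1))) n)

/-- The noncommutative wedge product of a `k`-form and an `l`-form on the lattice:
the antisymmetrization over all `k+l` indices of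
`ω_{μ₁⋯μ_k}(n) · θ_{ν₁⋯ν_l}(n + ê_{μ₁} + ⋯ + ê_{μ_k})`. -/
noncomputable def wedge {D : ℕ} (k l : ℕ) (ω θ : Coeff D) : Coeff D :=
  alt (k+l) (fun n μ => ω n μ * θ (multiShift k n μ) (fun i => μ (i+k)))

/-- Iterated noncommutative wedge power of a 2-form (the empty product is the
constant `1`, a 0-form). -/
noncomputable def wpow {D : ℕ} (F : Coeff D) : ℕ → Coeff D
  | 0 => fun _ _ => 1
  | m+1 => wedge 2 (2*m) F (wpow F m)

/-- Noncommutative wedge product of a list of (degree, form) pairs. -/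
noncomputable def wedgeList {D : ℕ} : List (ℕ × Coeff D) → Coeff D
  | [] => fun _ _ => 1
  | (d, ω) :: rest => wedge d ((rest.map Prod.fst).sum) ω (wedgeList rest)

/-- `ω` is a genuine lattice `k`-form: its coefficient depends only on the first
`k` indices and is totally antisymmetric in them. -/
def IsLatticeForm (D k : ℕ) (ω : Coeff D) : Prop :=
  (∀ (n : Site D) (μ ν : ℕ → Fin D), (∀ i < k, μ i = ν i) → ω n μ = ω n ν) ∧
  (∀ (n : Site D) (μ : ℕ → Fin D) (σ : Equiv.Perm (Fin k)),
    ω n (fun i => if h : i < k then μ ↑(σ ⟨i, h⟩) else μ i)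
      = ((Equiv.Perm.sign σ : ℤ) : ℝ) * ω n μ)

/-- Extend a tuple `m : Fin j → ℕ` to `ℕ → ℕ` by zero. -/
def mext {j : ℕ} (m : Fin j → ℕ) : ℕ → ℕ :=
  fun i => if h : i < j then m ⟨i, h⟩ else 0

/-- The curvature 2-form `F = dA` of a lattice 1-form `A`. -/
noncomputable def curv {D : ℕ} (A : Coeff D) : Coeff D := extd 1 A

/-- The standard descent product
`F_0^{m_0} ∧ η^{1,0} ∧ F_1^{m_1} ∧ η^{2,1} ∧ ⋯ ∧ η^{k,k-1} ∧ F_k^{m_k}`,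
with `F_i = dA_i` and `η^{i,i-1} = A_i - A_{i-1}`, as a list of (degree, form) pairs. -/
noncomputable def descentList {D : ℕ} (k : ℕ) (A : ℕ → Coeff D) (m : ℕ → ℕ) : List (ℕ × Coeff D) :=
  (2 * m 0, wpow (curv (A 0)) (m 0)) ::
    (List.range k).flatMap (fun i =>
      [(1, A (i+1) - A i), (2 * m (i+1), wpow (curv (A (i+1))) (m (i+1)))])

/-- The Chern–Simons type characteristic class `Q_r^{(k)}(A_0,…,A_k)` on the lattice:
the sum over compositions `m_0 + ⋯ + m_k = r - k` of the descent products. -/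
noncomputable def Qpoly {D : ℕ} (r k : ℕ) (A : ℕ → Coeff D) : Coeff D :=
  ∑ m ∈ Finset.Nat.antidiagonalTuple (k+1) (r - k), wedgeList (descentList k A (mext m))


section Alg
variable {R : Type*} [Ring R]

noncomputable def gser (F : R) : PowerSeries R := PowerSeries.mk (fun n => F ^ n)

lemma gser_left (F : R) : (1 - PowerSeries.X * PowerSeries.C F) * gser F = 1 := by
  ext n
  cases n with
  | zero => simp [gser, sub_mul, mul_assoc]
  | succ n => simp [gser, sub_mul, mul_assoc, PowerSeries.coeff_succ_X_mul, PowerSeries.coeff_one, pow_succ']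

lemma gser_right (F : R) : gser F * (1 - PowerSeries.X * PowerSeries.C F) = 1 := by
  ext n
  cases n with
  | zero => simp [gser, mul_sub, mul_assoc]
  | succ n => 
    rw [mul_sub, ← mul_assoc, (PowerSeries.commute_X (gser F)).eq, mul_assoc]
    simp [gser, PowerSeries.coeff_succ_X_mul, PowerSeries.coeff_one, pow_succ]

/-- Noncommutative word product. -/
noncomputable def pser : ℕ → (ℕ → R) → (ℕ → R) → PowerSeries R
  | 0, F, _ => gser (F 0)
  | k+1, F, a => gser (F 0) * PowerSeries.C (a 1 - a 0) * pser k (fun i => F (i+1)) (fun i => a (i+1))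

def omitAt {α : Type*} (i : ℕ) (a : ℕ → α) : ℕ → α := fun j => if j < i then a j else a (j+1)

lemma omitAt_zero {α : Type*} (a : ℕ → α) : omitAt 0 a = fun i => a (i+1) := by
  ext; simp [omitAt]

lemma omitAt_succ_shift {α : Type*} (i : ℕ) (a : ℕ → α) :
    (fun j => omitAt (i+1) a (j+1)) = omitAt i (fun j => a (j+1)) := by
  ext; simp [omitAt]

lemma gser_comm (U F : R) (h : U * F = F * U) :
    PowerSeries.C U * gser F = gser F * PowerSeries.C U := by
  have h' : Commute U F := h
  ext n
  simpa [gser] using (h'.pow_right n).eq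

lemma resolvent_gser (F G : R) :
    PowerSeries.X * (gser F * PowerSeries.C (G - F)) = 1 - gser F * (1 - PowerSeries.X * PowerSeries.C G) := by
  have h := gser_right F
  rw [mul_sub, mul_one, ← mul_assoc, (PowerSeries.commute_X (gser F)).eq, mul_assoc] at h
  rw [mul_sub, mul_one, ← mul_assoc (gser F) PowerSeries.X, (PowerSeries.commute_X (gser F)).eq, ← h,
    map_sub, mul_sub, mul_sub]
  noncomm_ring

lemma inv_pser (k : ℕ) (F a : ℕ → R) :
    (1 - PowerSeries.X * PowerSeries.C (F 0)) * pser (k+1) F a =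
     PowerSeries.C (a 1 - a 0) * pser k (fun i => F (i+1)) (fun i => a (i+1)) := by
  rw [pser, ← mul_assoc, ← mul_assoc, gser_left, one_mul]

lemma pser_descent (U : R) (k : ℕ) : ∀ (F a : ℕ → R) (hF : ∀ i, F i = U * a i + a i * U)
    (hUF : ∀ i, U * F i = F i * U),
    PowerSeries.X * (PowerSeries.C U * pser (k+1) F a - (-1)^(k+1) * (pser (k+1) F a * PowerSeries.C U))
      = ∑ i ∈ Finset.range (k+2), (-1)^i * pser k (omitAt i F) (omitAt i a) := by
  have key : ∀ (k : ℕ) (F a : ℕ → R) (hF : ∀ i, F i = U * a i + a i * U)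
    (hUF : ∀ i, U * F i = F i * U), 
    PowerSeries.C U * pser (k+1) F a - (-1)^(k+1) * (pser (k+1) F a * PowerSeries.C U) =
      gser (F 0) * PowerSeries.C (F 1 - F 0) * pser k (fun i => F (i+1)) (fun i => a (i+1))
      - gser (F 0) * PowerSeries.C (a 1 - a 0) * (PowerSeries.C U * pser k (fun i => F (i+1)) (fun i => a (i+1))
        - (-1)^k * (pser k (fun i => F (i+1)) (fun i => a (i+1)) * PowerSeries.C U)) := by
    intro k F a hF hUF
    rw [pser]
    generalize pser k (fun i => F (i+1)) (fun i => a (i+1)) = P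
    have h1 : PowerSeries.C (F 1 - F 0) = PowerSeries.C U * PowerSeries.C (a 1 - a 0) + PowerSeries.C (a 1 - a 0) * PowerSeries.C U := by
      rw [← map_mul, ← map_mul, ← map_add]; congr 1; rw [hF, hF]; noncomm_ring
    have h2 := gser_comm U (F 0) (hUF 0)
    rw [h1]
    generalize PowerSeries.C (a 1 - a 0) = E at *
    generalize gser (F 0) = G at *
    generalize PowerSeries.C U = V at *
    have h3 : V * (G * E * P) = G * V * E * P := by rw [← h2]; noncomm_ring
    rw [h3]
    rcases neg_one_pow_eq_or (PowerSeries R) k with h | h <;> rw [pow_succ, h] <;> noncomm_ring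
  induction k with
  | zero =>
    intro F a hF hUF
    rw [key 0 F a hF hUF]
    simp only [pser, zero_add, pow_zero, one_mul, gser_comm U (F 1) (hUF 1), sub_self, mul_zero, sub_zero]
    rw [← mul_assoc, resolvent_gser, sub_mul, mul_assoc, gser_left]
    simp [Finset.sum_range_succ, omitAt, sub_eq_add_neg]
  | succ k ih =>
    intro F a hF hUF
    have hi := inv_pser k (fun i => F (i+1)) (fun i => a (i+1))
    simp only [zero_add] at hi
    rw [key _ F a hF hUF, mul_sub, ← mul_assoc, resolvent_gser, sub_mul, mul_assoc (gser (F 0)), hi,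
      ← mul_assoc PowerSeries.X, ← (PowerSeries.commute_X _).eq, mul_assoc _ PowerSeries.X,
      ih _ _ (fun i => hF (i+1)) (fun i => hUF (i+1))]
    rw [Finset.sum_range_succ' _ (k+2), Finset.sum_range_succ' _ (k+1), Finset.sum_range_succ' _ (k+1)]
    have e : ∀ i, pser (k+1) (omitAt (i+1+1) F) (omitAt (i+1+1) a) = gser (F 0) * PowerSeries.C (a 1 - a 0) *
       pser k (omitAt (i+1) (fun i => F (i+1))) (omitAt (i+1) (fun i => a (i+1))) := by
      intro i
      rw [pser, omitAt_succ_shift, omitAt_succ_shift]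
      simp [omitAt]
    have e1 : pser (k+1) (omitAt (0+1) F) (omitAt (0+1) a) = gser (F 0) * PowerSeries.C (a 2 - a 0) *
       pser k (omitAt (0) (fun i => F (i+1))) (omitAt (0) (fun i => a (i+1))) := by
      rw [pser, omitAt_succ_shift, omitAt_succ_shift]
      simp [omitAt]
    rw [e1]
    simp only [e, omitAt_zero, mul_add, Finset.mul_sum]
    have s : ∀ i (x y : PowerSeries R), (-1)^(i+1+1) * (x * y) = - (x * ((-1)^(i+1) * y)) := by
      intro i x y
      rcases neg_one_pow_eq_or (PowerSeries R) i with h | h <;> rw [pow_succ, pow_succ, h] <;> noncomm_ring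
    simp only [s, Finset.sum_neg_distrib, map_sub]
    noncomm_ring

def word : ℕ → (ℕ → R) → (ℕ → R) → (ℕ → ℕ) → R
  | 0, F, _, m => F 0 ^ m 0
  | k+1, F, a, m => F 0 ^ m 0 * ((a 1 - a 0) * word k (fun i => F (i+1)) (fun i => a (i+1)) (fun i => m (i+1)))

lemma sum_antidiagonalTuple_succ {M : Type*} [AddCommMonoid M] (k n : ℕ) (f : (Fin (k+1) → ℕ) → M) :
    ∑ m ∈ Finset.Nat.antidiagonalTuple (k+1) n, f m =
      ∑ p ∈ Finset.HasAntidiagonal.antidiagonal n, ∑ m ∈ Finset.Nat.antidiagonalTuple k p.2, f (Fin.cons p.1 m) := by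
  rw [Finset.sum_sigma']
  symm
  refine Finset.sum_bij' (fun x _ => (Fin.cons x.1.1 x.2 : Fin (k+1) → ℕ))
    (fun m _ => ⟨(m 0, ∑ i, Fin.tail m i), Fin.tail m⟩) ?_ ?_ ?_ ?_ ?_
  · rintro ⟨⟨a, b⟩, m⟩ h
    simp [Finset.Nat.mem_antidiagonalTuple] at h ⊢
    simp [Fin.sum_univ_succ, h.2, h.1]
  · intro m h
    simp [Finset.Nat.mem_antidiagonalTuple, Fin.sum_univ_succ, Fin.tail] at h ⊢
    exact h
  · rintro ⟨⟨a, b⟩, m⟩ h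
    simp [Finset.Nat.mem_antidiagonalTuple] at h ⊢
    exact h.2
  · intro m h
    simp
  · intros; rfl

lemma coeff_pser (k : ℕ) : ∀ (n : ℕ) (F a : ℕ → R),
    PowerSeries.coeff n (pser k F a) = ∑ m ∈ Finset.Nat.antidiagonalTuple (k+1) n, word k F a (mext m) := by
  induction k with
  | zero =>
    intro n F a
    simp [pser, word, gser, mext]
  | succ k ih =>
    intro n F a
    rw [sum_antidiagonalTuple_succ, pser, mul_assoc, PowerSeries.coeff_mul]
    refine Finset.sum_congr rfl fun p _ => ?_
    rw [PowerSeries.coeff_C_mul, ih, Finset.mul_sum, Finset.mul_sum]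
    refine Finset.sum_congr rfl fun m _ => ?_
    rw [word]
    have : (fun i => mext (Fin.cons p.1 m : Fin (k+2) → ℕ) (i+1)) = mext m := by
      ext i
      simp only [mext, Nat.add_lt_add_iff_right]
      split_ifs with h
      · exact Fin.cons_succ (α := fun _ => ℕ) p.1 m ⟨i, h⟩
      · rfl
    rw [this]
    simp [gser, mext]

lemma word_descent (U : R) (k n : ℕ) (F a : ℕ → R) (hF : ∀ i, F i = U * a i + a i * U)
    (hUF : ∀ i, U * F i = F i * U) :
    U * (∑ m ∈ Finset.Nat.antidiagonalTuple (k+2) n, word (k+1) F a (mext m))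
      - (-1)^(k+1) * ((∑ m ∈ Finset.Nat.antidiagonalTuple (k+2) n, word (k+1) F a (mext m)) * U)
    = ∑ i ∈ Finset.range (k+2), (-1)^i * 
        ∑ m ∈ Finset.Nat.antidiagonalTuple (k+1) (n+1), word k (omitAt i F) (omitAt i a) (mext m) := by
  have h := congrArg (PowerSeries.coeff (n+1)) (pser_descent U k F a hF hUF)
  have s : ∀ i, ((-1 : PowerSeries R)^i) = PowerSeries.C ((-1)^i) := by intro i; simp
  rw [PowerSeries.coeff_succ_X_mul, map_sum] at h
  simpa only [s, map_sub, PowerSeries.coeff_C_mul, PowerSeries.coeff_mul_C, coeff_pser] using h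

lemma neg_pow_smul [Algebra ℝ R] (k : ℕ) (x : R) : (-1 : R)^k * x = (-1 : ℝ)^k • x := by
  rcases Nat.even_or_odd k with h' | h' <;> simp [h'.neg_one_pow]

lemma graded_one (U x : R) : U * x - (-1)^1 * (x * U) = U * x + x * U := by
  simp

lemma U_comm (U x : R) (h : U * U = 0) : U * (U * x + x * U) = (U * x + x * U) * U := by
  rw [mul_add, add_mul, ← mul_assoc, h, mul_assoc x, h, mul_assoc]; simp

lemma pow_parity (r k : ℕ) (h : k ≤ r) : (-1 : R) ^ (2 * r - k) = (-1) ^ k := by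
  obtain ⟨s, rfl⟩ : ∃ s, r = k + s := ⟨r - k, by omega⟩
  rw [show 2 * (k+s) - k = 2 * s + k by omega, pow_add, pow_mul]
  simp
end Alg

section Lat
variable {D : ℕ}

abbrev EA (D : ℕ) := ExteriorAlgebra ℝ (Fin D → ℝ)
abbrev FS (D : ℕ) := Site D → EA D

def eb (μ : Fin D) : Fin D → ℝ := Pi.single μ 1

def extq (z : Fin D) {k : ℕ} (μ : Fin k → Fin D) : ℕ → Fin D :=
  fun i => if h : i < k then μ ⟨i, h⟩ else z

lemma extq_lt (z : Fin D) {k : ℕ} (μ : Fin k → Fin D) (i : ℕ) (h : i < k) :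
    extq z μ i = μ ⟨i, h⟩ := by simp [extq, h]

def Loc (k : ℕ) (ω : Coeff D) : Prop :=
  ∀ (n : Site D) (μ ν : ℕ → Fin D), (∀ i < k, μ i = ν i) → ω n μ = ω n ν

/-- Realize a form as an operator. -/
noncomputable def Lop (z : Fin D) (k : ℕ) : Coeff D →ₗ[ℝ] Module.End ℝ (FS D) :=
  LinearMap.mk₂ ℝ (fun ω f n => ∑ μ : Fin k → Fin D, ω n (extq z μ) •
    (ExteriorAlgebra.ιMulti ℝ k (fun i => eb (μ i)) * f (multiShift k n (extq z μ))))
    (by intro a b f; ext n; simp [add_smul, Finset.sum_add_distrib])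
    (by intro a b f; ext n; simp [mul_smul, Finset.smul_sum])
    (by intro a b f; ext n; simp [mul_add, Finset.sum_add_distrib])
    (by intro c a f; ext n; simp only [Pi.smul_apply, mul_smul_comm, Finset.smul_sum]; exact Finset.sum_congr rfl fun _ _ => smul_comm _ _ _)

lemma Lop_apply (z : Fin D) (k : ℕ) (ω : Coeff D) (f : FS D) (n : Site D) :
    Lop z k ω f n = ∑ μ : Fin k → Fin D, ω n (extq z μ) •
    (ExteriorAlgebra.ιMulti ℝ k (fun i => eb (μ i)) * f (multiShift k n (extq z μ))) := rfl

noncomputable def Uop (D : ℕ) : Module.End ℝ (FS D) where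
  toFun f n := ∑ μ : Fin D, ExteriorAlgebra.ι ℝ (eb μ) * f (shiftSite n μ)
  map_add' f g := by ext n; simp [mul_add, Finset.sum_add_distrib]
  map_smul' c f := by ext n; simp [Finset.smul_sum]

lemma Uop_apply (f : FS D) (n : Site D) :
    Uop D f n = ∑ μ : Fin D, ExteriorAlgebra.ι ℝ (eb μ) * f (shiftSite n μ) := rfl

lemma shift_comm (n : Site D) (μ ν : Fin D) :
    shiftSite (shiftSite n μ) ν = shiftSite (shiftSite n ν) μ := by
  ext x; simp only [shiftSite]; ring

lemma Uop_sq : Uop D * Uop D = 0 := by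
  ext f n
  simp only [Module.End.mul_apply, Uop_apply, Finset.mul_sum, ← mul_assoc]
  set S := ∑ x : Fin D, ∑ i : Fin D, ExteriorAlgebra.ι ℝ (eb x) * ExteriorAlgebra.ι ℝ (eb i) *
    f (shiftSite (shiftSite n x) i) with hS
  have h : S = -S := by
    conv_lhs => rw [hS, Finset.sum_comm]
    rw [hS, ← Finset.sum_neg_distrib]
    refine Finset.sum_congr rfl fun x _ => ?_
    rw [← Finset.sum_neg_distrib]
    refine Finset.sum_congr rfl fun y _ => ?_
    rw [shift_comm, eq_neg_of_add_eq_zero_left (ExteriorAlgebra.ι_add_mul_swap (R := ℝ) (eb y) (eb x)), neg_mul]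
  have h2 : (2 : ℝ) • S = 0 := by
    rw [two_smul]; exact add_eq_zero_iff_eq_neg.mpr h
  exact (smul_eq_zero.mp h2).resolve_left two_ne_zero

lemma multiShift_extq (z : Fin D) {k : ℕ} (n : Site D) (μ : Fin k → Fin D) :
    multiShift k n (extq z μ) = fun ν => n ν + ∑ i : Fin k, if ν = μ i then 1 else 0 := by
  ext ν
  simp only [multiShift]
  rw [Finset.sum_range]
  simp [extq]

lemma perm_extq (z : Fin D) {k : ℕ} (μ : Fin k → Fin D) (σ : Equiv.Perm (Fin k)) :
    (fun i => if h : i < k then extq z μ ↑(σ ⟨i, h⟩) else extq z μ i) = extq z (μ ∘ σ) := by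
  ext i
  by_cases h : i < k <;> simp [h, extq]

lemma Lop_alt (z : Fin D) (k : ℕ) (c : Coeff D) : Lop z k (alt k c) = Lop z k c := by
  ext f n
  have key : ∀ σ : Equiv.Perm (Fin k), ∑ μ : Fin k → Fin D,
      (((Equiv.Perm.sign σ : ℤ) : ℝ) * c n (extq z (μ ∘ σ))) •
      (ExteriorAlgebra.ιMulti ℝ k (fun i => eb (μ i)) * f (multiShift k n (extq z μ))) = Lop z k c f n := by
    intro σ
    rw [Lop_apply]
    refine Fintype.sum_equiv (Equiv.arrowCongr σ.symm (Equiv.refl _)) _ _ ?_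
    intro μ
    have e : (Equiv.arrowCongr σ.symm (Equiv.refl (Fin D))) μ = μ ∘ σ := by ext; simp
    rw [e, multiShift_extq, multiShift_extq]
    have h1 : (fun i => eb ((μ ∘ σ) i)) = (fun i => eb (μ i)) ∘ σ := rfl
    rw [h1, AlternatingMap.map_perm]
    have h2 : ∀ ν, ∑ i : Fin k, (if ν = (μ ∘ σ) i then (1:ℤ) else 0) = ∑ i : Fin k, if ν = μ i then 1 else 0 := by
      intro ν
      exact Equiv.sum_comp σ (fun i => if ν = μ i then (1:ℤ) else 0)
    simp only [h2]
    rcases Int.units_eq_one_or (Equiv.Perm.sign σ) with h | h <;> simp [h]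
  rw [Lop_apply]
  simp only [alt, perm_extq, mul_smul, Finset.sum_smul]
  rw [← Finset.smul_sum, Finset.sum_comm]
  simp only [← mul_smul, key, Finset.sum_const, Finset.card_univ, Fintype.card_perm, Fintype.card_fin]
  rw [← Nat.cast_smul_eq_nsmul ℝ, smul_smul, inv_mul_cancel₀ (by positivity), one_smul]

lemma Lop_wedge (z : Fin D) (k l : ℕ) (ω θ : Coeff D) (hω : Loc k ω) :
    Lop z (k+l) (wedge k l ω θ) = Lop z k ω * Lop z l θ := by
  rw [wedge, Lop_alt]
  ext f n
  rw [Module.End.mul_apply, Lop_apply, Lop_apply, ← (Fin.appendEquiv k l).sum_comp, Fintype.sum_prod_type]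
  refine Finset.sum_congr rfl fun μ _ => ?_
  rw [Lop_apply, Finset.mul_sum, Finset.smul_sum]
  refine Finset.sum_congr rfl fun ν _ => ?_
  have e : (Fin.appendEquiv k l) (μ, ν) = Fin.append μ ν := rfl
  rw [e]
  have h0 : ∀ i < k, extq z (Fin.append μ ν) i = extq z μ i := by
    intro i hi
    rw [extq_lt _ _ _ (by omega), extq_lt _ _ _ hi]
    exact Fin.append_left μ ν ⟨i, hi⟩
  have h1 : ω n (extq z (Fin.append μ ν)) = ω n (extq z μ) := hω _ _ _ h0
  have h2 : (fun i => extq z (Fin.append μ ν) (i+k)) = extq z ν := by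
    ext i
    by_cases hi : i < l
    · rw [extq_lt _ _ _ (by omega), extq_lt _ _ _ hi]
      have : (⟨i+k, by omega⟩ : Fin (k+l)) = Fin.natAdd k ⟨i, hi⟩ := by ext; simp [add_comm]
      rw [this, Fin.append_right]
    · simp only [extq, hi, dif_neg, not_false_eq_true]
      rw [dif_neg (by omega)]
  have h3 : multiShift k n (extq z (Fin.append μ ν)) = multiShift k n (extq z μ) := by
    ext x
    simp only [multiShift]
    congr 1
    refine Finset.sum_congr rfl fun i hi => ?_
    rw [h0 i (Finset.mem_range.mp hi)]
  have h4 : multiShift (k+l) n (extq z (Fin.append μ ν)) = multiShift l (multiShift k n (extq z μ)) (extq z ν) := by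
    simp only [multiShift_extq]
    ext x
    rw [Fin.sum_univ_add, add_assoc]
    simp only [Fin.append_left, Fin.append_right]
  have h5 : ExteriorAlgebra.ιMulti ℝ (k+l) (fun i => eb (Fin.append μ ν i)) =
      ExteriorAlgebra.ιMulti ℝ k (fun i => eb (μ i)) * ExteriorAlgebra.ιMulti ℝ l (fun i => eb (ν i)) := by
    simp only [ExteriorAlgebra.ιMulti_apply]
    rw [← List.prod_append, ← List.ofFn_fin_append]
    congr 2
    ext i
    refine Fin.addCases (fun i => ?_) (fun i => ?_) i <;> simp
  rw [h1, h2, h3, h4, h5, mul_smul, mul_smul_comm, mul_assoc]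

lemma ι_mul_ιMulti (k : ℕ) (x : Fin D → ℝ) : ∀ (v : Fin k → Fin D → ℝ), 
    ExteriorAlgebra.ι ℝ x * ExteriorAlgebra.ιMulti ℝ k v =
      (-1 : ℝ)^k • (ExteriorAlgebra.ιMulti ℝ k v * ExteriorAlgebra.ι ℝ x) := by
  induction k with
  | zero => intro v; simp
  | succ k ih =>
    intro v
    rw [ExteriorAlgebra.ιMulti_succ_apply, ← mul_assoc,
      eq_neg_of_add_eq_zero_left (ExteriorAlgebra.ι_add_mul_swap (R := ℝ) x (v 0)), neg_mul, mul_assoc, ih,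
      pow_succ, mul_assoc]
    simp

lemma Lop_extd (z : Fin D) (k : ℕ) (ω : Coeff D) :
    Lop z (k+1) (extd k ω) = Uop D * Lop z k ω - (-1 : Module.End ℝ (FS D))^k * (Lop z k ω * Uop D) := by
  rw [extd, Lop_alt]
  have hs : (-1 : Module.End ℝ (FS D))^k * (Lop z k ω * Uop D) = (-1:ℝ)^k • (Lop z k ω * Uop D) := neg_pow_smul k _
  rw [hs]
  ext f n
  rw [Lop_apply, ← (Fin.consEquiv (fun _ => Fin D)).sum_comp, Fintype.sum_prod_type]
  simp only [LinearMap.sub_apply, LinearMap.smul_apply, Pi.sub_apply, Pi.smul_apply, Module.End.mul_apply]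
  rw [Uop_apply, Lop_apply]
  simp only [Uop_apply, Lop_apply, Finset.mul_sum, Finset.smul_sum]
  rw [Finset.sum_comm (s := (Finset.univ : Finset (Fin k → Fin D))), ← Finset.sum_sub_distrib]
  refine Finset.sum_congr rfl fun x _ => ?_
  rw [← Finset.sum_sub_distrib]
  refine Finset.sum_congr rfl fun μ _ => ?_
  have e : (Fin.consEquiv (fun _ => Fin D)) (x, μ) = (Fin.cons x μ : Fin (k+1) → Fin D) := rfl
  rw [e]
  have h0 : extq z (Fin.cons x μ : Fin (k+1) → Fin D) 0 = x := by simp [extq]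
  have h1 : (fun i => extq z (Fin.cons x μ : Fin (k+1) → Fin D) (i+1)) = extq z μ := by
    ext i
    simp only [extq, Nat.add_lt_add_iff_right]
    split_ifs with h
    · exact congrArg _ (Fin.cons_succ (α := fun _ => Fin D) x μ ⟨i, h⟩)
    · rfl
  have h2 : multiShift (k+1) n (extq z (Fin.cons x μ : Fin (k+1) → Fin D)) =
      multiShift k (shiftSite n x) (extq z μ) := by
    simp only [multiShift_extq]
    ext y
    rw [Fin.sum_univ_succ]
    simp only [Fin.cons_zero, Fin.cons_succ, shiftSite, add_assoc]
  have h3 : shiftSite (multiShift k n (extq z μ)) x = multiShift k (shiftSite n x) (extq z μ) := by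
    ext y; simp only [shiftSite, multiShift]; ring
  have h4 : ExteriorAlgebra.ιMulti ℝ (k+1) (fun i => eb ((Fin.cons x μ : Fin (k+1) → Fin D) i)) =
      ExteriorAlgebra.ι ℝ (eb x) * ExteriorAlgebra.ιMulti ℝ k (fun i => eb (μ i)) := by
    rw [ExteriorAlgebra.ιMulti_succ_apply]
    rfl
  simp only [h0, h1, h2, h3, h4, fdiff]
  rw [sub_smul, mul_smul_comm, mul_assoc]
  congr 1
  rw [← mul_assoc, ι_mul_ιMulti, smul_mul_assoc, smul_comm, mul_assoc]

lemma ilf_inj (z : Fin D) (k : ℕ) (ω θ : Coeff D) (hω : IsLatticeForm D k ω) (hθ : IsLatticeForm D k θ)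
    (h : Lop z k ω = Lop z k θ) : ω = θ := by
  have key : ∀ ω : Coeff D, IsLatticeForm D k ω → ∀ n (ν : ℕ → Fin D),
     ExteriorAlgebra.liftAlternating (R := ℝ) (M := Fin D → ℝ) (N := ℝ)
      (fun j => (Matrix.detRowAlternating (n := Fin j) (R := ℝ)).compLinearMap
        (LinearMap.funLeft ℝ ℝ (fun i : Fin j => ν i))) (Lop z k ω (fun _ => 1) n) = (k.factorial : ℝ) * ω n ν := by
    intro ω hω n ν
    rw [Lop_apply, map_sum]
    simp only [mul_one, map_smul, ExteriorAlgebra.liftAlternating_apply_ιMulti]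
    have hd : ∀ μ : Fin k → Fin D, ((Matrix.detRowAlternating (n := Fin k) (R := ℝ)).compLinearMap
        (LinearMap.funLeft ℝ ℝ (fun i : Fin k => ν i))) (fun i => eb (μ i)) =
        ∑ σ : Equiv.Perm (Fin k), ((Equiv.Perm.sign σ : ℤ) : ℝ) * if μ = (fun i => ν (σ i)) then 1 else 0 := by
      intro μ
      rw [AlternatingMap.compLinearMap_apply]
      change Matrix.det (Matrix.of fun i j => (eb (μ i)) (ν j)) = _
      rw [← Matrix.det_transpose, Matrix.det_apply']
      refine Finset.sum_congr rfl fun σ _ => ?_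
      congr 1
      simp only [Matrix.transpose_apply, Matrix.of_apply, eb, Pi.single_apply]
      rw [Finset.prod_ite_zero]
      simp only [funext_iff, Finset.mem_univ, true_imp_iff, Finset.prod_const_one, eq_comm]
    simp only [hd, smul_eq_mul, Finset.mul_sum]
    rw [Finset.sum_comm]
    have : ∀ σ : Equiv.Perm (Fin k), ∑ μ : Fin k → Fin D, ω n (extq z μ) * (((Equiv.Perm.sign σ : ℤ) : ℝ) *
        if μ = (fun i => ν (σ i)) then 1 else 0) = ω n ν := by
      intro σ
      simp only [mul_ite, mul_one, mul_zero, Finset.sum_ite_eq', Finset.mem_univ, if_true]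
      have h1 := hω.2 n ν σ
      have h2 : ω n (extq z (fun i => ν (σ i))) = ω n (fun i => if h : i < k then ν ↑(σ ⟨i, h⟩) else ν i) := by
        apply hω.1
        intro i hi
        simp [extq, hi]
      rw [h2, h1]
      rcases Int.units_eq_one_or (Equiv.Perm.sign σ) with h | h <;> simp [h]
    simp only [this, Finset.sum_const, Finset.card_univ, Fintype.card_perm, Fintype.card_fin, nsmul_eq_mul]
  ext n ν
  have h1 := key ω hω n ν
  rw [h, key θ hθ n ν] at h1
  exact (mul_left_cancel₀ (by positivity) h1).symm

lemma ilf_alt (k : ℕ) (c : Coeff D) (hc : Loc k c) : IsLatticeForm D k (alt k c) := by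
  constructor
  · intro n μ ν h
    simp only [alt]
    congr 1
    refine Finset.sum_congr rfl fun σ _ => ?_
    congr 1
    apply hc
    intro i hi
    simp [hi, h]
  · intro n μ σ
    simp only [alt]
    rw [mul_left_comm]
    congr 1
    rw [Finset.mul_sum]
    refine Fintype.sum_equiv (Equiv.mulLeft σ) _ _ ?_
    intro τ
    have h2 : c n (fun i => if h : i < k then if h' : (τ ⟨i, h⟩ : ℕ) < k then μ ↑(σ ⟨(τ ⟨i, h⟩ : ℕ), h'⟩) else μ ↑(τ ⟨i, h⟩)
         else if h : i < k then μ ↑(σ ⟨i, h⟩) else μ i) =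
        c n (fun i => if h : i < k then μ ↑((Equiv.mulLeft σ τ) ⟨i, h⟩) else μ i) := by
      apply hc
      intro i hi
      simp [hi]
    rw [h2, Equiv.coe_mulLeft, Equiv.Perm.sign_mul]
    rcases Int.units_eq_one_or (Equiv.Perm.sign σ) with h | h <;> simp [h]

lemma ilf_extd (k : ℕ) (ω : Coeff D) (h : Loc k ω) : IsLatticeForm D (k+1) (extd k ω) := by
  apply ilf_alt
  intro n μ ν hμ
  simp only [fdiff, hμ 0 (by omega)]
  rw [h _ (fun i => μ (i+1)) (fun i => ν (i+1)) (fun i hi => hμ _ (by omega)),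
    h _ (fun i => μ (i+1)) (fun i => ν (i+1)) (fun i hi => hμ _ (by omega))]

lemma ilf_wedge (k l : ℕ) (ω θ : Coeff D) (h : Loc k ω) (h' : Loc l θ) :
    IsLatticeForm D (k+l) (wedge k l ω θ) := by
  apply ilf_alt
  intro n μ ν hμ
  have : multiShift k n μ = multiShift k n ν := by
    ext x
    simp only [multiShift]
    congr 1
    refine Finset.sum_congr rfl fun i hi => ?_
    rw [hμ i (by have := Finset.mem_range.mp hi; omega)]
  simp only [this]
  rw [h n μ ν (fun i hi => hμ _ (by omega)),
    h' _ (fun i => μ (i+k)) (fun i => ν (i+k)) (fun i hi => hμ _ (by omega))]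

lemma ilf_one : IsLatticeForm D 0 (fun _ _ => 1) := by
  refine ⟨fun _ _ _ _ => rfl, fun n μ σ => ?_⟩
  simp [Subsingleton.elim σ 1]

lemma ilf_sum {ι : Type*} (k : ℕ) (s : Finset ι) (f : ι → Coeff D) (h : ∀ i ∈ s, IsLatticeForm D k (f i)) :
    IsLatticeForm D k (∑ i ∈ s, f i) := by
  constructor
  · intro n μ ν hμ
    simp only [Finset.sum_apply]
    exact Finset.sum_congr rfl fun i hi => (h i hi).1 n μ ν hμ
  · intro n μ σ
    simp only [Finset.sum_apply, Finset.mul_sum]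
    exact Finset.sum_congr rfl fun i hi => (h i hi).2 n μ σ

lemma ilf_smul (k : ℕ) (c : ℝ) (f : Coeff D) (h : IsLatticeForm D k f) :
    IsLatticeForm D k (c • f) := by
  constructor
  · intro n μ ν hμ
    simp only [Pi.smul_apply]
    rw [h.1 n μ ν hμ]
  · intro n μ σ
    simp only [Pi.smul_apply]
    rw [h.2 n μ σ, smul_eq_mul, smul_eq_mul, mul_left_comm]

lemma Lop_one (z : Fin D) : Lop z 0 (fun _ _ => 1) = 1 := by
  ext f n
  rw [Lop_apply]
  simp [multiShift_extq]

lemma loc_wpow (F : Coeff D) (hF : Loc 2 F) (m : ℕ) : Loc (2*m) (wpow F m) := by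
  induction m with
  | zero => exact ilf_one.1
  | succ m ih =>
    rw [wpow, show 2*(m+1) = 2+2*m by ring]
    exact (ilf_wedge _ _ _ _ hF ih).1

lemma Lop_wpow (z : Fin D) (F : Coeff D) (hF : Loc 2 F) (m : ℕ) :
    Lop z (2*m) (wpow F m) = (Lop z 2 F)^m := by
  induction m with
  | zero => simpa [wpow] using Lop_one z
  | succ m ih =>
    rw [wpow, show 2*(m+1) = 2+2*m by ring, Lop_wedge _ _ _ _ _ hF, ih, pow_succ']

lemma ilf_wedgeList (l : List (ℕ × Coeff D)) (h : ∀ p ∈ l, Loc p.1 p.2) :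
    IsLatticeForm D ((l.map Prod.fst).sum) (wedgeList l) := by
  induction l with
  | nil => exact ilf_one
  | cons p l ih =>
    obtain ⟨d, ω⟩ := p
    simp only [wedgeList, List.map_cons, List.sum_cons]
    exact ilf_wedge _ _ _ _ (h (d, ω) (by simp)) (ih (fun p hp => h p (by simp [hp]))).1

lemma Lop_wedgeList_cons (z : Fin D) (d : ℕ) (ω : Coeff D) (l : List (ℕ × Coeff D)) (h : Loc d ω) :
    Lop z ((((d, ω) :: l).map Prod.fst).sum) (wedgeList ((d, ω) :: l)) =
      Lop z d ω * Lop z ((l.map Prod.fst).sum) (wedgeList l) := by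
  simp only [wedgeList, List.map_cons, List.sum_cons]
  exact Lop_wedge _ _ _ _ _ h

lemma descentList_succ (k : ℕ) (A : ℕ → Coeff D) (m : ℕ → ℕ) :
    descentList (k+1) A m = (2 * m 0, wpow (curv (A 0)) (m 0)) :: (1, A 1 - A 0) ::
      descentList k (fun i => A (i+1)) (fun i => m (i+1)) := by
  simp [descentList, List.range_succ_eq_map, List.flatMap_map]

lemma loc_sub (k : ℕ) (ω θ : Coeff D) (h : Loc k ω) (h' : Loc k θ) : Loc k (ω - θ) := by
  intro n μ ν hμ
  simp only [Pi.sub_apply]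
  rw [h n μ ν hμ, h' n μ ν hμ]

lemma descent_loc (k : ℕ) : ∀ (A : ℕ → Coeff D) (m : ℕ → ℕ) (hA : ∀ i ≤ k, Loc 1 (A i)),
    ∀ p ∈ descentList k A m, Loc p.1 p.2 := by
  induction k with
  | zero =>
    intro A m hA p hp
    simp [descentList] at hp
    subst hp
    exact loc_wpow _ (ilf_extd 1 _ (hA 0 (by omega))).1 _
  | succ k ih =>
    intro A m hA p hp
    rw [descentList_succ, List.mem_cons, List.mem_cons] at hp
    rcases hp with rfl | rfl | hp
    · exact loc_wpow _ (ilf_extd 1 _ (hA 0 (by omega))).1 _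
    · exact loc_sub _ _ _ (hA 1 (by omega)) (hA 0 (by omega))
    · exact ih _ _ (fun i hi => hA (i+1) (by omega)) p hp

lemma descent_deg (k : ℕ) : ∀ (A : ℕ → Coeff D) (m : ℕ → ℕ),
    ((descentList k A m).map Prod.fst).sum = 2 * (∑ i ∈ Finset.range (k+1), m i) + k := by
  induction k with
  | zero => intro A m; simp [descentList]
  | succ k ih =>
    intro A m
    rw [descentList_succ, List.map_cons, List.map_cons, List.sum_cons, List.sum_cons, ih,
      Finset.sum_range_succ' _ (k+1)]
    ring

lemma descent_Lop (z : Fin D) (k : ℕ) : ∀ (A : ℕ → Coeff D) (m : ℕ → ℕ) (hA : ∀ i ≤ k, Loc 1 (A i)),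
    Lop z (((descentList k A m).map Prod.fst).sum) (wedgeList (descentList k A m)) =
      word k (fun i => Lop z 2 (curv (A i))) (fun i => Lop z 1 (A i)) m := by
  induction k with
  | zero =>
    intro A m hA
    have hc : Loc 2 (curv (A 0)) := (ilf_extd 1 _ (hA 0 (by omega))).1
    rw [show descentList 0 A m = [(2 * m 0, wpow (curv (A 0)) (m 0))] by simp [descentList],
      Lop_wedgeList_cons _ _ _ _ (loc_wpow _ hc _), Lop_wpow _ _ hc, word]
    simp only [List.map_nil, List.sum_nil, wedgeList]
    rw [Lop_one, mul_one]
  | succ k ih =>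
    intro A m hA
    have hc : Loc 2 (curv (A 0)) := (ilf_extd 1 _ (hA 0 (by omega))).1
    rw [descentList_succ, Lop_wedgeList_cons _ _ _ _ (loc_wpow _ hc _), Lop_wpow _ _ hc,
      Lop_wedgeList_cons _ _ _ _ (loc_sub _ _ _ (hA 1 (by omega)) (hA 0 (by omega))),
      ih _ _ (fun i hi => hA (i+1) (by omega)), word, map_sub]

lemma mext_sum (k n : ℕ) (m : Fin k → ℕ) (h : m ∈ Finset.Nat.antidiagonalTuple k n) :
    ∑ i ∈ Finset.range k, mext m i = n := by
  rw [Finset.Nat.mem_antidiagonalTuple] at h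
  rw [Finset.sum_range, ← h]
  simp [mext]

lemma ilf_Qpoly (r k d : ℕ) (hd : d = 2 * (r - k) + k) (A : ℕ → Coeff D) (hA : ∀ i ≤ k, Loc 1 (A i)) :
    IsLatticeForm D d (Qpoly r k A) := by
  apply ilf_sum
  intro m hm
  have := ilf_wedgeList _ (descent_loc k A (mext m) hA)
  rwa [descent_deg, mext_sum _ _ _ hm, ← hd] at this

lemma Lop_Qpoly (z : Fin D) (r k d : ℕ) (hd : d = 2 * (r - k) + k) (A : ℕ → Coeff D) (hA : ∀ i ≤ k, Loc 1 (A i)) :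
    Lop z d (Qpoly r k A) = ∑ m ∈ Finset.Nat.antidiagonalTuple (k+1) (r-k),
      word k (fun i => Lop z 2 (curv (A i))) (fun i => Lop z 1 (A i)) (mext m) := by
  rw [Qpoly, map_sum]
  refine Finset.sum_congr rfl fun m hm => ?_
  have := descent_Lop z k A (mext m) hA
  rwa [descent_deg, mext_sum _ _ _ hm, ← hd] at this

end Lat

/-- **Descent equations on the lattice.**
For `1 ≤ k ≤ r` and lattice 1-forms `A_0, …, A_k` on `ℤ^D`, the exterior
differential of the `k`-th Chern–Simons type characteristic class equals the
coboundary (alternating sum over the omission of one argument) of the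
`(k-1)`-th Chern–Simons type characteristic class. -/
theorem descent_equations (D r k : ℕ) (hD : 1 ≤ D) (hr : 1 ≤ r) (hk : 1 ≤ k) (hkr : k ≤ r)
    (A : ℕ → Coeff D) (hA : ∀ i ≤ k, IsLatticeForm D 1 (A i)) :
    extd (2 * r - k) (Qpoly r k A)
      = ∑ i ∈ Finset.range (k+1),
          ((-1 : ℝ) ^ i) • Qpoly (D := D) r (k-1) (fun j => if j < i then A j else A (j+1)) := by
  obtain ⟨k, rfl⟩ : ∃ k', k = k' + 1 := ⟨k - 1, by omega⟩
  simp only [Nat.add_sub_cancel]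
  have z : Fin D := ⟨0, hD⟩
  have hL : ∀ i ≤ k + 1, Loc 1 (A i) := fun i hi => (hA i hi).1
  change _ = ∑ i ∈ Finset.range (k+1+1), ((-1 : ℝ) ^ i) • Qpoly (D := D) r k (omitAt i A)
  have hO : ∀ i, ∀ j ≤ k, Loc 1 (omitAt i A j) := by
    intro i j hj
    simp only [omitAt]
    split_ifs
    · exact hL _ (by omega)
    · exact hL _ (by omega)
  apply ilf_inj z (2 * r - (k+1) + 1)
  · exact ilf_extd _ _ (ilf_Qpoly r (k+1) _ (by omega) A hL).1
  · exact ilf_sum _ _ _ fun i _ => ilf_smul _ _ _ (ilf_Qpoly r k _ (by omega) _ (hO i))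
  · have hc : ∀ B : Coeff D, Lop z 2 (curv B) = Uop D * Lop z 1 B + Lop z 1 B * Uop D := by
      intro B
      exact (Lop_extd z 1 B).trans (graded_one _ _)
    have hd := word_descent (Uop D) k (r - (k+1)) (fun i => Lop z 2 (curv (A i))) (fun i => Lop z 1 (A i))
      (fun i => hc _) (by
        intro i
        simp only [hc]
        exact U_comm _ _ Uop_sq)
    rw [Lop_extd, Lop_Qpoly z r (k+1) _ (by omega) A hL, map_sum]
    have hp : (-1 : Module.End ℝ (FS D)) ^ (2 * r - (k+1)) = (-1) ^ (k+1) := pow_parity r (k+1) hkr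
    rw [hp, hd]
    refine Finset.sum_congr rfl fun i _ => ?_
    rw [map_smul, Lop_Qpoly z r k _ (by omega) _ (hO i), show r - (k+1) + 1 = r - k by omega]
    have h1 : omitAt i (fun j => Lop z 2 (curv (A j))) = fun j => Lop z 2 (curv (omitAt i A j)) := by
      funext j; simp only [omitAt]; split_ifs <;> rfl
    have h2 : omitAt i (fun j => Lop z 1 (A j)) = fun j => Lop z 1 (omitAt i A j) := by
      funext j; simp only [omitAt]; split_ifs <;> rfl
    rw [h1, h2]
    exact neg_pow_smul i _
end

section
/- Let D ≥ 1, let r ≥ 2 and 2 ≤ k ≤ r, and let A_0, …, A_k be lattice 1-forms on ℤ^D; set F_i = dA_i and η^{i,j} = A_i − A_j. Write compositions m = (m_0,…,m_k) ∈ ℕ^{k+1} with the constraint indicated under each sum, and in every displayed wedge product the factors appear exactly in the indicated order, the elided middle portions following the alternating pattern ⋯ ∧ F_t^{m_t} ∧ η^{t+1,t} ∧ F_{t+1}^{m_{t+1}} ∧ ⋯. Then: Σ_{j=2}^{k} (−1)^{j−1} Σ_{Σm_l = r−k, m_{j−2}=m_{j−1}=0} F_0^{m_0} ∧ η^{1,0}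 ∧ ⋯ ∧ F_{j−3}^{m_{j−3}} ∧ η^{j−2,j−3} ∧ η^{j−1,j−2} ∧ F_j^{m_j+1} ∧ η^{j+1,j} ∧ ⋯ ∧ F_k^{m_k} + Σ_{i=1}^{k−1} (−1)^i Σ_{Σm_l = r−k, m_i=m_{i+1}=0} F_0^{m_0} ∧ η^{1,0} ∧ ⋯ ∧ F_{i−1}^{m_{i−1}+1} ∧ η^{i+1,i} ∧ η^{i+2,i+1} ∧ F_{i+2}^{m_{i+2}} ∧ ⋯ ∧ F_k^{m_k} = Σ_{Σm_l = r−k+1, m_0=m_1=0} η^{2,1} ∧ F_2^{m_2} ∧ η^{3,2} ∧ ⋯ ∧ F_k^{m_k} + (−1)^k Σ_{Σm_l = r−k+1, m_{k−1}=m_k=0} F_0^{m_0} ∧ η^{1,0} ∧ ⋯ ∧ F_{k−2}^{m_{k−2}} ∧ η^{k−1,k−2} + Σ_{t=1}^{k−1} (−1)^t Σ_{Σm_l = r−k, m_t=m_{t+1}=0} F_0^{m_0} ∧ ⋯ ∧ F_{t−1}^{m_{t−1}+1} ∧ η^{t+1,t−1} ∧ η^{t+2,t+1} ∧ F_{t+2}^{m_{t+2}}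 ∧ ⋯ ∧ F_k^{m_k} + Σ_{s=1}^{k−1} (−1)^s Σ_{Σm_l = r−k+1, m_{s−1}=m_s=0} F_0^{m_0} ∧ ⋯ ∧ F_{s−2}^{m_{s−2}} ∧ η^{s−1,s−2} ∧ η^{s+1,s−1} ∧ F_{s+1}^{m_{s+1}} ∧ ⋯ ∧ F_k^{m_k}. -/
open scoped BigOperators

/-- The descent product with possibly modified `η`-factors: the `η`-factor
`η^{j, low j} = A_j - A_{low j}` is used in the `j`-th slot, and the `η`-factor
with upper index `del` is deleted (the elided middle portions follow the
alternating pattern `⋯ ∧ F_t^{m_t} ∧ η ∧ F_{t+1}^{m_{t+1}} ∧ ⋯`; a factor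
`F_t^0` is the empty product, i.e. the constant-1 0-form). -/
noncomputable def gList {D : ℕ} (k : ℕ) (A : ℕ → Coeff D) (m : ℕ → ℕ)
    (low : ℕ → ℕ) (del : ℕ) : List (ℕ × Coeff D) :=
  (2 * m 0, wpow (curv (A 0)) (m 0)) ::
    (List.range k).flatMap (fun i =>
      (if i + 1 = del then [] else [(1, A (i+1) - A (low (i+1)))]) ++
      [(2 * m (i+1), wpow (curv (A (i+1))) (m (i+1)))])

/-- Bump the composition `m` by one in the `j`-th entry. -/
def bump (m : ℕ → ℕ) (j : ℕ) : ℕ → ℕ := fun i => if i = j then m i + 1 else m i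

theorem alt_add' {D : ℕ} (k : ℕ) (c c' : Coeff D) : alt k (c + c') = alt k c + alt k c' := by
  funext n μ
  simp only [alt, Pi.add_apply, mul_add, Finset.sum_add_distrib]

theorem alt_act {D : ℕ} (k : ℕ) (c : Coeff D) (n : Site D) (μ : ℕ → Fin D)
    (σ : Equiv.Perm (Fin k)) :
    alt k c n (fun i => if h : i < k then μ ↑(σ ⟨i, h⟩) else μ i)
      = ((Equiv.Perm.sign σ : ℤ) : ℝ) * alt k c n μ := by
  simp only [alt]
  rw [mul_left_comm]
  congr 1
  rw [Finset.mul_sum]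
  refine Fintype.sum_equiv (Equiv.mulLeft σ) _ _ fun τ => ?_
  have hs : ((Equiv.Perm.sign σ : ℤ) : ℝ) * ((Equiv.Perm.sign σ : ℤ) : ℝ) = 1 := by
    rcases Int.units_eq_one_or (Equiv.Perm.sign σ) with h | h <;> simp [h]
  have he : (fun i => if h : i < k then
      (if h' : (↑(τ ⟨i, h⟩) : ℕ) < k then μ ↑(σ ⟨↑(τ ⟨i, h⟩), h'⟩) else μ ↑(τ ⟨i, h⟩))
      else (if h' : i < k then μ ↑(σ ⟨i, h'⟩) else μ i))
      = (fun i => if h : i < k then μ ↑((σ * τ) ⟨i, h⟩) else μ i) := by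
    funext i
    by_cases h : i < k
    · simp [h]
    · simp [h]
  rw [he]
  simp only [Equiv.coe_mulLeft, Equiv.Perm.sign_mul, Units.val_mul, Int.cast_mul]
  rw [← mul_assoc, ← mul_assoc, hs, one_mul]

theorem alt_alt {D : ℕ} (k : ℕ) (c : Coeff D) : alt k (alt k c) = alt k c := by
  funext n μ
  have hs (σ : Equiv.Perm (Fin k)) :
      ((Equiv.Perm.sign σ : ℤ) : ℝ) * ((Equiv.Perm.sign σ : ℤ) : ℝ) = 1 := by
    rcases Int.units_eq_one_or (Equiv.Perm.sign σ) with h | h <;> simp [h]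
  rw [alt]
  simp only [alt_act, ← mul_assoc, hs, one_mul]
  simp only [Finset.sum_const, Finset.card_univ, Fintype.card_perm, Fintype.card_fin,
    nsmul_eq_mul]
  rw [← mul_assoc, inv_mul_cancel₀, one_mul]
  exact_mod_cast Nat.factorial_ne_zero k

theorem wedge_add_left {D : ℕ} (k l : ℕ) (ω ω' θ : Coeff D) :
    wedge k l (ω + ω') θ = wedge k l ω θ + wedge k l ω' θ := by
  simp only [wedge]
  rw [← alt_add']
  congr 1
  funext n μ
  simp [add_mul]

theorem wedge_add_right {D : ℕ} (k l : ℕ) (ω θ θ' : Coeff D) :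
    wedge k l ω (θ + θ') = wedge k l ω θ + wedge k l ω θ' := by
  simp only [wedge]
  rw [← alt_add']
  congr 1
  funext n μ
  simp [mul_add]

theorem wedge_one {D : ℕ} (l : ℕ) (θ : Coeff D) :
    wedge 0 l (fun _ _ => 1) θ = alt l θ := by
  simp only [wedge]
  rw [Nat.zero_add]
  congr 1
  funext n μ
  have h : multiShift 0 n μ = n := by
    funext ν
    simp [multiShift]
  simp [h]

theorem wedgeList_unit {D : ℕ} (p : ℕ × Coeff D) (L : List (ℕ × Coeff D)) :
    wedgeList ((0, fun _ _ => 1) :: p :: L) = wedgeList (p :: L) := by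
  obtain ⟨d, ω⟩ := p
  rw [wedgeList, wedge_one]
  simp only [List.map_cons, List.sum_cons, wedgeList]
  rw [wedge, alt_alt]

theorem wedgeList_prefix {D : ℕ} (P L L1 L2 : List (ℕ × Coeff D))
    (h1 : (L1.map Prod.fst).sum = (L.map Prod.fst).sum)
    (h2 : (L2.map Prod.fst).sum = (L.map Prod.fst).sum)
    (h : wedgeList L = wedgeList L1 + wedgeList L2) :
    wedgeList (P ++ L) = wedgeList (P ++ L1) + wedgeList (P ++ L2) := by
  induction P with
  | nil => simpa using h
  | cons p P ih =>
    obtain ⟨d, ω⟩ := p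
    simp only [List.cons_append, wedgeList, ih, wedge_add_right, List.map_append,
      List.sum_append, h1, h2]

theorem core_list {D : ℕ} (a b c : Coeff D) (q : ℕ × Coeff D) (R : List (ℕ × Coeff D)) :
    wedgeList ((0, fun _ _ => 1) :: (1, c - a) :: q :: R)
      = wedgeList ((0, fun _ _ => 1) :: (1, c - b) :: q :: R)
        + wedgeList ((1, b - a) :: (0, fun _ _ => 1) :: q :: R) := by
  rw [wedgeList_unit, wedgeList_unit]
  have : wedgeList ((1, b - a) :: (0, fun _ _ => 1) :: q :: R)
      = wedgeList ((1, b - a) :: q :: R) := by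
    rw [wedgeList, wedgeList_unit]
    simp [wedgeList]
  rw [this]
  simp only [wedgeList]
  rw [← wedge_add_left]
  congr 1
  abel

theorem gList_split {D : ℕ} (a q : ℕ) (A : ℕ → Coeff D) (m low : ℕ → ℕ) (del : ℕ) :
    gList (a + 2 + q) A m low del =
    gList a A m low del ++
      ((if a + 1 = del then [] else [(1, A (a+1) - A (low (a+1)))]) ++
      ((2 * m (a+1), wpow (curv (A (a+1))) (m (a+1))) ::
      ((if a + 2 = del then [] else [(1, A (a+2) - A (low (a+2)))]) ++
      ((2 * m (a+2), wpow (curv (A (a+2))) (m (a+2))) ::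
      (List.range q).flatMap (fun i =>
      (if (a+2+i) + 1 = del then [] else [(1, A ((a+2+i)+1) - A (low ((a+2+i)+1)))]) ++
      [(2 * m ((a+2+i)+1), wpow (curv (A ((a+2+i)+1))) (m ((a+2+i)+1)))]))))) := by
  simp only [gList]
  rw [List.range_add, List.range_succ, List.range_succ]
  simp [List.flatMap_append, List.flatMap_map]

theorem gList_congr {D : ℕ} (k : ℕ) (A : ℕ → Coeff D) (m low low' : ℕ → ℕ) (del del' : ℕ)
    (hd : k < del) (hd' : k < del') (h : ∀ i ≤ k, low i = low' i) :
    gList k A m low del = gList k A m low' del' := by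
  simp only [gList]
  congr 1
  simp only [List.flatMap_def]
  congr 1
  refine List.map_congr_left fun i hi => ?_
  rw [List.mem_range] at hi
  rw [if_neg (by omega), if_neg (by omega), h (i+1) (by omega)]

theorem key_split {D : ℕ} (a q : ℕ) (A : ℕ → Coeff D) (m : ℕ → ℕ) (hm : m (a+1) = 0) :
    wedgeList (gList (a+2+q) A m (fun b => if b = (a+1)+1 then (a+1)-1 else b - 1) (a+1)) =
    wedgeList (gList (a+2+q) A m (fun b => b - 1) (a+1)) +
    wedgeList (gList (a+2+q) A m (fun b => b - 1) (a+2)) := by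
  rw [gList_split, gList_split, gList_split]
  rw [gList_congr a A m (fun b => if b = (a+1)+1 then (a+1)-1 else b - 1) (fun b => b - 1)
    (a+1) (a+2) (by omega) (by omega) (by intro i hi; simp; omega),
    gList_congr a A m (fun b => b - 1) (fun b => b - 1)
    (a+1) (a+2) (by omega) (by omega) (by intro i hi; rfl)]
  have e1 : ∀ i, ¬ (a + 2 + i + 1 = a + 1) := by intro i; omega
  have e2 : ∀ i, ¬ (a + 2 + i + 1 = a + 2) := by intro i; omega
  have e3 : ∀ i, ¬ (a + 2 + i + 1 = a + 1 + 1) := by intro i; omega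
  have e4 : ¬ (a + 2 = a + 1) := by omega
  have e5 : ¬ (a + 1 = a + 2) := by omega
  have e6 : a + 2 = a + 1 + 1 := by omega
  simp only [e1, e2, e3, e4, e5, hm, wpow, if_true, if_false, List.nil_append, Nat.mul_zero,
    List.cons_append]
  refine wedgeList_prefix _ _ _ _ ?_ ?_ ?_
  · simp
  · simp
  · simpa using core_list (A a) (A (a+1)) (A (a+2)) _ _

theorem sum_bump {M : Type*} [AddCommMonoid M] (k n p a b : ℕ) (hp : p ≤ k) (ha : a ≠ p)
    (hb : b ≠ p) (f : (ℕ → ℕ) → M) :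
    ∑ m ∈ (Finset.Nat.antidiagonalTuple (k+1) n).filter
        (fun m => mext m a = 0 ∧ mext m b = 0), f (bump (mext m) p)
    = ∑ m ∈ ((Finset.Nat.antidiagonalTuple (k+1) (n+1)).filter
        (fun m => mext m a = 0 ∧ mext m b = 0)).filter (fun m => ¬ mext m p = 0),
        f (mext m) := by
  have hp' : p < k + 1 := by omega
  set P : Fin (k+1) := ⟨p, hp'⟩ with hP
  have hmp (m : Fin (k+1) → ℕ) : mext m p = m P := by simp [mext, hp', hP]
  have hup (m : Fin (k+1) → ℕ) (v c : ℕ) (hc : c ≠ p) :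
      mext (Function.update m P v) c = mext m c := by
    simp only [mext]
    split_ifs with h
    · rw [Function.update_of_ne]
      intro h2
      exact hc (congrArg Fin.val h2)
    · rfl
  have hupp (m : Fin (k+1) → ℕ) (v : ℕ) : mext (Function.update m P v) p = v := by
    rw [hmp, Function.update_self]
  have hsum (m : Fin (k+1) → ℕ) (v : ℕ) :
      (∑ i, Function.update m P v i) + m P = (∑ i, m i) + v := by
    rw [Finset.sum_update_of_mem (Finset.mem_univ P),
      ← Finset.add_sum_erase Finset.univ m (Finset.mem_univ P), Finset.sdiff_singleton_eq_erase]
    omega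
  refine Finset.sum_nbij' (fun m => Function.update m P (m P + 1))
    (fun m => Function.update m P (m P - 1)) ?_ ?_ ?_ ?_ ?_
  · intro m hm
    simp only [Finset.mem_filter, Finset.Nat.mem_antidiagonalTuple] at hm ⊢
    rw [hup _ _ _ ha, hup _ _ _ hb, hupp]
    have := hsum m (m P + 1)
    refine ⟨⟨?_, hm.2⟩, by omega⟩
    omega
  · intro m hm
    simp only [Finset.mem_filter, Finset.Nat.mem_antidiagonalTuple] at hm ⊢
    rw [hup _ _ _ ha, hup _ _ _ hb]
    have := hsum m (m P - 1)
    have h0 := hm.2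
    rw [hmp] at h0
    refine ⟨?_, hm.1.2⟩
    omega
  · intro m hm
    simp
  · intro m hm
    have h0 := (Finset.mem_filter.1 hm).2
    rw [hmp] at h0
    have : m P - 1 + 1 = m P := by omega
    simp [this]
  · intro m hm
    congr 1
    funext c
    simp only [bump]
    split_ifs with h
    · subst h
      rw [hupp, hmp]
    · rw [hup _ _ _ h]

theorem telescope {M : Type*} [AddCommGroup M] [Module ℝ M] (E : ℕ → M) (K : ℕ) :
    E 1 + ((-1 : ℝ)^(K+1)) • E (K+1)
      + ∑ t ∈ Finset.range K, ((-1 : ℝ)^(t+1)) • (E (t+1) + E (t+2)) = 0 := by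
  induction K with
  | zero => simp
  | succ K ih =>
    rw [Finset.sum_range_succ, ← ih]
    have : ((-1 : ℝ)^(K+1+1)) = - (-1 : ℝ)^(K+1) := by ring
    rw [this, neg_smul, smul_add]
    abel

theorem filter_split {M : Type*} [AddCommMonoid M] {α : Type*} (S : Finset α)
    (x y z : α → ℕ) (f : α → M) :
    ∑ m ∈ (S.filter (fun m => y m = 0 ∧ z m = 0)).filter (fun m => ¬ x m = 0), f m
    + ∑ m ∈ S.filter (fun m => x m = 0 ∧ y m = 0), f m
    = ∑ m ∈ S.filter (fun m => y m = 0 ∧ z m = 0), f m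
    + ∑ m ∈ (S.filter (fun m => x m = 0 ∧ y m = 0)).filter (fun m => ¬ z m = 0), f m := by
  rw [← Finset.sum_filter_add_sum_filter_not (S.filter (fun m => x m = 0 ∧ y m = 0))
      (fun m => z m = 0),
    ← Finset.sum_filter_add_sum_filter_not (S.filter (fun m => y m = 0 ∧ z m = 0))
      (fun m => x m = 0)]
  have : (S.filter (fun m => x m = 0 ∧ y m = 0)).filter (fun m => z m = 0)
      = (S.filter (fun m => y m = 0 ∧ z m = 0)).filter (fun m => x m = 0) := by
    ext m; simp only [Finset.mem_filter]; tauto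
  rw [this]
  abel

/-- **Lemma 4.2** (the key `G`-invariant form identity behind the lattice descent
equations), for lattice 1-forms `A_0, …, A_k` on `ℤ^D`, `2 ≤ k ≤ r`. -/
theorem descent_lemma (D r k : ℕ) (hD : 1 ≤ D) (hr : 2 ≤ r) (hk : 2 ≤ k) (hkr : k ≤ r)
    (A : ℕ → Coeff D) (hA : ∀ i ≤ k, IsLatticeForm D 1 (A i)) :
    -- Σ_{j=2}^{k} (−1)^{j−1} Σ_{Σm = r−k, m_{j−2}=m_{j−1}=0}
    --   F_0^{m_0} ∧ η^{1,0} ∧ ⋯ ∧ F_{j−3}^{m_{j−3}} ∧ η^{j−2,j−3} ∧ η^{j−1,j−2} ∧ F_j^{m_j+1} ∧ ⋯ ∧ F_k^{m_k}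
    (∑ j ∈ Finset.Icc 2 k, ((-1 : ℝ) ^ (j-1)) •
        ∑ m ∈ (Finset.Nat.antidiagonalTuple (k+1) (r-k)).filter
            (fun m => mext m (j-2) = 0 ∧ mext m (j-1) = 0),
          wedgeList (gList k A (bump (mext m) j) (fun a => a - 1) j))
    -- + Σ_{i=1}^{k−1} (−1)^i Σ_{Σm = r−k, m_i=m_{i+1}=0}
    --   F_0^{m_0} ∧ ⋯ ∧ F_{i−1}^{m_{i−1}+1} ∧ η^{i+1,i} ∧ η^{i+2,i+1} ∧ F_{i+2}^{m_{i+2}} ∧ ⋯ ∧ F_k^{m_k}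
    + (∑ i ∈ Finset.Icc 1 (k-1), ((-1 : ℝ) ^ i) •
        ∑ m ∈ (Finset.Nat.antidiagonalTuple (k+1) (r-k)).filter
            (fun m => mext m i = 0 ∧ mext m (i+1) = 0),
          wedgeList (gList k A (bump (mext m) (i-1)) (fun a => a - 1) i))
    =
    -- Σ_{Σm = r−k+1, m_0=m_1=0} η^{2,1} ∧ F_2^{m_2} ∧ η^{3,2} ∧ ⋯ ∧ F_k^{m_k}
    (∑ m ∈ (Finset.Nat.antidiagonalTuple (k+1) (r-k+1)).filter
          (fun m => mext m 0 = 0 ∧ mext m 1 = 0),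
        wedgeList (gList k A (mext m) (fun a => a - 1) 1))
    -- + (−1)^k Σ_{Σm = r−k+1, m_{k−1}=m_k=0} F_0^{m_0} ∧ ⋯ ∧ F_{k−2}^{m_{k−2}} ∧ η^{k−1,k−2}
    + ((-1 : ℝ) ^ k) •
      (∑ m ∈ (Finset.Nat.antidiagonalTuple (k+1) (r-k+1)).filter
          (fun m => mext m (k-1) = 0 ∧ mext m k = 0),
        wedgeList (gList k A (mext m) (fun a => a - 1) k))
    -- + Σ_{t=1}^{k−1} (−1)^t Σ_{Σm = r−k, m_t=m_{t+1}=0}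
    --   F_0^{m_0} ∧ ⋯ ∧ F_{t−1}^{m_{t−1}+1} ∧ η^{t+1,t−1} ∧ η^{t+2,t+1} ∧ F_{t+2}^{m_{t+2}} ∧ ⋯ ∧ F_k^{m_k}
    + (∑ t ∈ Finset.Icc 1 (k-1), ((-1 : ℝ) ^ t) •
        ∑ m ∈ (Finset.Nat.antidiagonalTuple (k+1) (r-k)).filter
            (fun m => mext m t = 0 ∧ mext m (t+1) = 0),
          wedgeList (gList k A (bump (mext m) (t-1))
            (fun a => if a = t+1 then t-1 else a - 1) t))
    -- + Σ_{s=1}^{k−1} (−1)^s Σ_{Σm = r−k+1, m_{s−1}=m_s=0}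
    --   F_0^{m_0} ∧ ⋯ ∧ F_{s−2}^{m_{s−2}} ∧ η^{s−1,s−2} ∧ η^{s+1,s−1} ∧ F_{s+1}^{m_{s+1}} ∧ ⋯ ∧ F_k^{m_k}
    + (∑ s ∈ Finset.Icc 1 (k-1), ((-1 : ℝ) ^ s) •
        ∑ m ∈ (Finset.Nat.antidiagonalTuple (k+1) (r-k+1)).filter
            (fun m => mext m (s-1) = 0 ∧ mext m s = 0),
          wedgeList (gList k A (mext m)
            (fun a => if a = s+1 then s-1 else a - 1) s)) := by
  obtain ⟨K, rfl⟩ : ∃ K, k = K + 1 := ⟨k - 1, by omega⟩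
  have icc1 (g : ℕ → Coeff D) : ∑ i ∈ Finset.Icc 1 (K + 1 - 1), g i
      = ∑ t ∈ Finset.range K, g (t+1) := by
    rw [Finset.range_eq_Ico, Finset.sum_Ico_add' g 0 K 1]
    rfl
  have icc2 (g : ℕ → Coeff D) : ∑ i ∈ Finset.Icc 2 (K + 1), g i
      = ∑ t ∈ Finset.range K, g (t+2) := by
    rw [Finset.range_eq_Ico, Finset.sum_Ico_add' g 0 K 2]
    rfl
  rw [icc1, icc1, icc1, icc2]
  set S := Finset.Nat.antidiagonalTuple (K+1+1) (r-(K+1)+1) with hS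
  set E : ℕ → Coeff D := fun s => ∑ m ∈ S.filter
    (fun m => mext m (s-1) = 0 ∧ mext m s = 0),
      wedgeList (gList (K+1) A (mext m) (fun a => a - 1) s) with hE
  have tel := telescope E K
  have main : ∀ t ∈ Finset.range K, 
      (((-1 : ℝ) ^ (t+2-1)) •
        ∑ m ∈ (Finset.Nat.antidiagonalTuple (K+1+1) (r-(K+1))).filter
            (fun m => mext m (t+2-2) = 0 ∧ mext m (t+2-1) = 0),
          wedgeList (gList (K+1) A (bump (mext m) (t+2)) (fun a => a - 1) (t+2)))
      + (((-1 : ℝ) ^ (t+1)) •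
        ∑ m ∈ (Finset.Nat.antidiagonalTuple (K+1+1) (r-(K+1))).filter
            (fun m => mext m (t+1) = 0 ∧ mext m (t+1+1) = 0),
          wedgeList (gList (K+1) A (bump (mext m) (t+1-1)) (fun a => a - 1) (t+1)))
      + ((-1 : ℝ)^(t+1)) • (E (t+1) + E (t+2))
      = (((-1 : ℝ) ^ (t+1)) •
        ∑ m ∈ (Finset.Nat.antidiagonalTuple (K+1+1) (r-(K+1))).filter
            (fun m => mext m (t+1) = 0 ∧ mext m (t+1+1) = 0),
          wedgeList (gList (K+1) A (bump (mext m) (t+1-1))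
            (fun a => if a = t+1+1 then t+1-1 else a - 1) (t+1)))
      + (((-1 : ℝ) ^ (t+1)) •
        ∑ m ∈ S.filter
            (fun m => mext m (t+1-1) = 0 ∧ mext m (t+1) = 0),
          wedgeList (gList (K+1) A (mext m)
            (fun a => if a = t+1+1 then t+1-1 else a - 1) (t+1))) := by
    intro t ht
    rw [Finset.mem_range] at ht
    obtain ⟨q, hq⟩ : ∃ q, K + 1 = t + 2 + q := ⟨K + 1 - (t+2), by omega⟩
    have key : ∀ m : ℕ → ℕ, m (t+1) = 0 → _ := fun m hm => key_split t q A m hm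
    rw [← hq] at key
    rw [sum_bump (K+1) _ (t+2) _ _ (by omega) (by omega) (by omega)
        (fun m => wedgeList (gList (K+1) A m (fun a => a - 1) (t+2))),
      sum_bump (K+1) _ (t+1-1) _ _ (by omega) (by omega) (by omega)
        (fun m => wedgeList (gList (K+1) A m (fun a => a - 1) (t+1))),
      sum_bump (K+1) _ (t+1-1) _ _ (by omega) (by omega) (by omega)
        (fun m => wedgeList (gList (K+1) A m
          (fun a => if a = t+1+1 then t+1-1 else a - 1) (t+1)))]
    rw [← hS]
    have c1 : ∀ m ∈ (S.filter (fun m => mext m (t+1) = 0 ∧ mext m (t+1+1) = 0)).filter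
        (fun m => ¬ mext m (t+1-1) = 0), _ :=
      fun m hm => key (mext m) (Finset.mem_filter.1 (Finset.mem_filter.1 hm).1).2.1
    have c2 : ∀ m ∈ S.filter (fun m => mext m (t+1-1) = 0 ∧ mext m (t+1) = 0), _ :=
      fun m hm => key (mext m) (Finset.mem_filter.1 hm).2.2
    rw [Finset.sum_congr rfl c1, Finset.sum_congr rfl c2, Finset.sum_add_distrib,
      Finset.sum_add_distrib]
    have fs := filter_split S (fun m => mext m t) (fun m => mext m (t+1))
      (fun m => mext m (t+2))
      (fun m => wedgeList (gList (K+1) A (mext m) (fun a => a - 1) (t+2)))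
    simp only [hE]
    simp only [show t + 2 - 2 = t by omega, show t + 2 - 1 = t + 1 by omega,
      show t + 1 - 1 = t by omega, show t + 1 + 1 = t + 2 by omega]
    simp only [← smul_add]
    congr 1
    have aux : ∀ X D1 C1 E2 C2 D2 : Coeff D, C2 + D2 = E2 + X →
        X + C1 + (D1 + E2) = C1 + C2 + (D1 + D2) := by
      intro X D1 C1 E2 C2 D2 h
      calc X + C1 + (D1 + E2) = C1 + D1 + (E2 + X) := by abel
        _ = C1 + D1 + (C2 + D2) := by rw [h]
        _ = _ := by abel
    exact aux _ _ _ _ _ _ fs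
  have ms := Finset.sum_congr rfl main
  simp only [Finset.sum_add_distrib] at ms
  have aux : ∀ L1 L2 T C D' x y : Coeff D, L1 + L2 + T = C + D' → x + y + T = 0 →
      L1 + L2 = x + y + C + D' := by
    intro L1 L2 T C D' x y h h'
    calc L1 + L2 = L1 + L2 + (x + y + T) := by rw [h', add_zero]
      _ = x + y + (L1 + L2 + T) := by abel
      _ = x + y + (C + D') := by rw [h]
      _ = _ := by abel
  exact aux _ _ _ _ _ _ _ ms tel
end

section
/- Lattice transgression formula (case k = 1 of the descent equations): Let A_0 and A_1 be lattice 1-forms on ℤ^D, set F_0 = dA_0, F_1 = dA_1 and η^{1,0} = A_1 − A_0, and let r ≥ 1. Then in the noncommutative wedge algebra of lattice forms, F_1^{r} − F_0^{r} = d( Σ_{m=0}^{r−1} F_0^{m} ∧ η^{1,0} ∧ F_1^{r−1−m} ), where powers denote iterated noncommutative wedge products. -/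
open scoped BigOperators

namespace LT

/-- permutation action on index sequences -/
def pact {D : ℕ} (k : ℕ) (σ : Equiv.Perm (Fin k)) (μ : ℕ → Fin D) : ℕ → Fin D :=
  fun i => if h : i < k then μ ↑(σ ⟨i, h⟩) else μ i

/-- raw tensor product -/
def T {D : ℕ} (k : ℕ) (a b : Coeff D) : Coeff D :=
  fun n μ => a n μ * b (multiShift k n μ) (fun i => μ (i+k))

/-- depends only on first k indices -/
def Dep {D : ℕ} (k : ℕ) (c : Coeff D) : Prop :=
  ∀ (n : Site D) (μ ν : ℕ → Fin D), (∀ i < k, μ i = ν i) → c n μ = c n ν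

/-- the constant one form -/
def e {D : ℕ} : Coeff D := fun _ _ => 1

variable {D : ℕ}

lemma alt_eq (k : ℕ) (c : Coeff D) (n : Site D) (μ : ℕ → Fin D) :
    alt k c n μ = ((k.factorial : ℝ))⁻¹ *
      ∑ σ : Equiv.Perm (Fin k), ((Equiv.Perm.sign σ : ℤ) : ℝ) * c n (pact k σ μ) := rfl

lemma wedge_eq (k l : ℕ) (a b : Coeff D) : wedge k l a b = alt (k+l) (T k a b) := rfl

lemma pact_mul (k : ℕ) (σ τ : Equiv.Perm (Fin k)) (μ : ℕ → Fin D) :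
    pact k τ (pact k σ μ) = pact k (σ * τ) μ := by
  funext i
  unfold pact
  by_cases h : i < k <;> simp [h]

lemma sign_sq {k : ℕ} (τ : Equiv.Perm (Fin k)) :
    ((Equiv.Perm.sign τ : ℤ) : ℝ) * ((Equiv.Perm.sign τ : ℤ) : ℝ) = 1 := by
  rcases Int.units_eq_one_or (Equiv.Perm.sign τ) with h | h <;> simp [h]

lemma alt_pact (k : ℕ) (τ : Equiv.Perm (Fin k)) (c : Coeff D) :
    alt k (fun n μ => c n (pact k τ μ)) = ((Equiv.Perm.sign τ : ℤ) : ℝ) • alt k c := by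
  funext n μ
  simp only [Pi.smul_apply, smul_eq_mul, alt_eq, pact_mul]
  rw [mul_left_comm]
  congr 1
  rw [Finset.mul_sum, ← Equiv.sum_comp (Equiv.mulRight τ)
    (fun σ => ((Equiv.Perm.sign τ : ℤ) : ℝ) * (((Equiv.Perm.sign σ : ℤ) : ℝ) * c n (pact k σ μ)))]
  refine Finset.sum_congr rfl fun σ _ => ?_
  simp only [Equiv.coe_mulRight, Equiv.Perm.sign_mul, Units.val_mul, Int.cast_mul]
  linear_combination (- ((Equiv.Perm.sign σ : ℤ) : ℝ) * c n (pact k (σ * τ) μ)) * sign_sq τ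

lemma alt_add (k : ℕ) (a b : Coeff D) : alt k (a + b) = alt k a + alt k b := by
  funext n μ
  simp [alt_eq, mul_add, Finset.sum_add_distrib]

lemma alt_smul (k : ℕ) (r : ℝ) (a : Coeff D) : alt k (r • a) = r • alt k a := by
  funext n μ
  simp only [alt_eq, Pi.smul_apply, smul_eq_mul, Finset.mul_sum]
  refine Finset.sum_congr rfl fun σ _ => ?_
  ring

/-- alt as linear map -/
noncomputable def altL (k : ℕ) : Coeff D →ₗ[ℝ] Coeff D where
  toFun := alt k
  map_add' := alt_add k
  map_smul' := alt_smul k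

lemma alt_sum {ι : Type*} (k : ℕ) (s : Finset ι) (f : ι → Coeff D) :
    alt k (∑ i ∈ s, f i) = ∑ i ∈ s, alt k (f i) := map_sum (altL k) f s

lemma alt_sub (k : ℕ) (a b : Coeff D) : alt k (a - b) = alt k a - alt k b :=
  map_sub (altL k) a b

/-- averaging over signed permutations coming from a sign-preserving family -/
lemma alt_avg (k K : ℕ) (c c' : Coeff D) (f : Equiv.Perm (Fin k) → Equiv.Perm (Fin K))
    (hf : ∀ τ, Equiv.Perm.sign (f τ) = Equiv.Perm.sign τ)
    (h : ∀ n μ, c' n μ = ((k.factorial : ℝ))⁻¹ *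
      ∑ τ : Equiv.Perm (Fin k), ((Equiv.Perm.sign τ : ℤ) : ℝ) * c n (pact K (f τ) μ)) :
    alt K c' = alt K c := by
  have : c' = ((k.factorial : ℝ))⁻¹ • ∑ τ : Equiv.Perm (Fin k),
      ((Equiv.Perm.sign τ : ℤ) : ℝ) • (fun n μ => c n (pact K (f τ) μ) : Coeff D) := by
    funext n μ
    simp [h, Finset.sum_apply]
  rw [this, alt_smul, alt_sum]
  simp only [alt_smul, alt_pact, hf, smul_smul, sign_sq, one_smul]
  simp [Fintype.card_perm, ← Nat.cast_smul_eq_nsmul ℝ, smul_smul, Nat.factorial_ne_zero]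

lemma alt_alt (k : ℕ) (c : Coeff D) : alt k (alt k c) = alt k c :=
  alt_avg k k c _ id (fun _ => rfl) (fun _ _ => rfl)

/-- left embedding -/
def lft {k : ℕ} (l : ℕ) (τ : Equiv.Perm (Fin k)) : Equiv.Perm (Fin (k+l)) :=
  finSumFinEquiv.permCongr (Equiv.Perm.sumCongr τ 1)

/-- right embedding -/
def rgt (k : ℕ) {l : ℕ} (τ : Equiv.Perm (Fin l)) : Equiv.Perm (Fin (k+l)) :=
  finSumFinEquiv.permCongr (Equiv.Perm.sumCongr 1 τ)

lemma sign_lft {k : ℕ} (l : ℕ) (τ : Equiv.Perm (Fin k)) :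
    Equiv.Perm.sign (lft l τ) = Equiv.Perm.sign τ := by
  simp [lft, Equiv.Perm.sign_permCongr, Equiv.Perm.sign_sumCongr]

lemma sign_rgt (k : ℕ) {l : ℕ} (τ : Equiv.Perm (Fin l)) :
    Equiv.Perm.sign (rgt k τ) = Equiv.Perm.sign τ := by
  simp [rgt, Equiv.Perm.sign_permCongr, Equiv.Perm.sign_sumCongr]

lemma pact_lft {k : ℕ} (l : ℕ) (τ : Equiv.Perm (Fin k)) (μ : ℕ → Fin D) :
    pact (k+l) (lft l τ) μ = pact k τ μ := by
  funext i
  unfold pact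
  by_cases h : i < k
  · have h2 : i < k + l := by omega
    have : (⟨i, h2⟩ : Fin (k+l)) = Fin.castAdd l ⟨i, h⟩ := rfl
    simp only [h, h2, dite_true, this, lft, Equiv.permCongr_apply,
      finSumFinEquiv_symm_apply_castAdd]
    simp
  · by_cases h2 : i < k + l
    · have : (⟨i, h2⟩ : Fin (k+l)) = Fin.natAdd k ⟨i - k, by omega⟩ := by
        ext; simp; omega
      simp only [h, h2, dite_true, dite_false, this, lft, Equiv.permCongr_apply,
        finSumFinEquiv_symm_apply_natAdd]
      simp; congr 1; omega
    · simp [h, h2]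

lemma pact_rgt_lt (k : ℕ) {l : ℕ} (τ : Equiv.Perm (Fin l)) (μ : ℕ → Fin D) (i : ℕ) (h : i < k) :
    pact (k+l) (rgt k τ) μ i = μ i := by
  unfold pact
  have h2 : i < k + l := by omega
  have : (⟨i, h2⟩ : Fin (k+l)) = Fin.castAdd l ⟨i, h⟩ := rfl
  simp only [h2, dite_true, this, rgt, Equiv.permCongr_apply,
      finSumFinEquiv_symm_apply_castAdd]
  simp

lemma pact_rgt_add (k : ℕ) {l : ℕ} (τ : Equiv.Perm (Fin l)) (μ : ℕ → Fin D) :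
    (fun i => pact (k+l) (rgt k τ) μ (i+k)) = pact l τ (fun i => μ (i+k)) := by
  funext i
  unfold pact
  by_cases h : i < l
  · have h2 : i + k < k + l := by omega
    have : (⟨i+k, h2⟩ : Fin (k+l)) = Fin.natAdd k ⟨i, h⟩ := by
        ext; simp; omega
    simp only [h, h2, dite_true, this, rgt, Equiv.permCongr_apply,
        finSumFinEquiv_symm_apply_natAdd]
    simp [add_comm]
  · have h2 : ¬ i + k < k + l := by omega
    simp [h, h2]

lemma multiShift_congr (k : ℕ) (n : Site D) (μ ν : ℕ → Fin D) (h : ∀ i < k, μ i = ν i) :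
    multiShift k n μ = multiShift k n ν := by
  funext x
  unfold multiShift
  congr 1
  exact Finset.sum_congr rfl fun i hi => by rw [h i (Finset.mem_range.1 hi)]

lemma multiShift_pact (k : ℕ) (τ : Equiv.Perm (Fin k)) (n : Site D) (μ : ℕ → Fin D) :
    multiShift k n (pact k τ μ) = multiShift k n μ := by
  funext x
  unfold multiShift
  congr 1
  rw [Finset.sum_range, Finset.sum_range,
    ← Equiv.sum_comp τ (fun i : Fin k => if x = μ i then (1:ℤ) else 0)]
  refine Finset.sum_congr rfl fun i _ => ?_
  simp [pact]

lemma alt_T_left (k l : ℕ) (a b : Coeff D) :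
    alt (k+l) (T k (alt k a) b) = alt (k+l) (T k a b) := by
  refine alt_avg k (k+l) _ _ (lft l) (sign_lft l) fun n μ => ?_
  simp only [T, alt_eq, pact_lft, multiShift_pact]
  rw [mul_assoc, Finset.sum_mul]
  congr 1
  refine Finset.sum_congr rfl fun τ _ => ?_
  have : (fun i => pact k τ μ (i+k)) = fun i => μ (i+k) := by
    funext i; simp [pact]
  rw [this, mul_assoc]

lemma alt_T_right (k l : ℕ) (a b : Coeff D) (ha : Dep k a) :
    alt (k+l) (T k a (alt l b)) = alt (k+l) (T k a b) := by
  refine alt_avg l (k+l) _ _ (rgt k) (sign_rgt k) fun n μ => ?_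
  simp only [T, alt_eq, pact_rgt_add]
  rw [mul_left_comm, Finset.mul_sum]
  congr 1
  refine Finset.sum_congr rfl fun τ _ => ?_
  rw [ha n _ μ (pact_rgt_lt k τ μ), multiShift_congr k n _ μ (pact_rgt_lt k τ μ)]
  ring

lemma T_assoc (k l : ℕ) (a b c : Coeff D) :
    T (k+l) (T k a b) c = T k a (T l b c) := by
  funext n μ
  have h1 : multiShift (k+l) n μ = multiShift l (multiShift k n μ) (fun i => μ (i+k)) := by
    funext x
    simp only [multiShift, Finset.sum_range_add, add_assoc]
    simp [add_comm]
  have h2 : (fun i => μ (i+(k+l))) = fun i => μ (i+l+k) := by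
    funext i; congr 1; omega
  simp only [T, h1, h2, mul_assoc]

lemma wedge_assoc {k l m kl lm : ℕ} (a b c : Coeff D) (ha : Dep k a)
    (h1 : kl = k + l) (h2 : lm = l + m) :
    wedge kl m (wedge k l a b) c = wedge k lm a (wedge l m b c) := by
  subst h1 h2
  rw [wedge_eq, wedge_eq, alt_T_left, T_assoc, wedge_eq, wedge_eq, alt_T_right _ _ _ _ ha, add_assoc]

lemma wedge_add_left (k l : ℕ) (a a' b : Coeff D) :
    wedge k l (a + a') b = wedge k l a b + wedge k l a' b := by
  rw [wedge_eq, wedge_eq, wedge_eq, ← alt_add]; congr 1; funext n μ; simp [T, add_mul]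

lemma wedge_sub_left (k l : ℕ) (a a' b : Coeff D) :
    wedge k l (a - a') b = wedge k l a b - wedge k l a' b := by
  rw [wedge_eq, wedge_eq, wedge_eq, ← alt_sub]; congr 1; funext n μ; simp [T, sub_mul]

lemma wedge_add_right (k l : ℕ) (a b b' : Coeff D) :
    wedge k l a (b + b') = wedge k l a b + wedge k l a b' := by
  rw [wedge_eq, wedge_eq, wedge_eq, ← alt_add]; congr 1; funext n μ; simp [T, mul_add]

lemma wedge_sub_right (k l : ℕ) (a b b' : Coeff D) :
    wedge k l a (b - b') = wedge k l a b - wedge k l a b' := by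
  rw [wedge_eq, wedge_eq, wedge_eq, ← alt_sub]; congr 1; funext n μ; simp [T, mul_sub]

lemma Dep_alt (k : ℕ) (c : Coeff D) (h : Dep k c) : Dep k (alt k c) := by
  intro n μ ν hμ
  rw [alt_eq, alt_eq]
  congr 1
  refine Finset.sum_congr rfl fun σ _ => ?_
  congr 1
  apply h
  intro i hi
  simp [pact, hi, hμ]

lemma Dep_wedge {k l K : ℕ} (a b : Coeff D) (ha : Dep k a) (hb : Dep l b) (hK : K = k + l) :
    Dep K (wedge k l a b) := by
  subst hK
  apply Dep_alt
  intro n μ ν h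
  simp only [T]
  rw [ha n μ ν (fun i hi => h i (by omega)),
    multiShift_congr k n μ ν (fun i hi => h i (by omega))]
  congr 1
  exact hb _ _ _ fun i hi => h _ (by omega)

lemma Dep_e (k : ℕ) : Dep k (e : Coeff D) := fun _ _ _ _ => rfl

lemma alt_shift (k : ℕ) (ω : Coeff D) (hω : Dep k ω) :
    alt (k+1) (fun n μ => ω n (fun i => μ (i+1))) = ((-1:ℝ)^k) • alt (k+1) ω := by
  have h := alt_pact (k+1) (finRotate (k+1)) ω
  rw [sign_finRotate] at h
  simp only [Units.val_pow_eq_pow_val, Units.val_neg, Units.val_one, Int.cast_pow, Int.cast_neg,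
    Int.cast_one] at h
  rw [add_tsub_cancel_right] at h
  rw [← h]
  congr 1
  funext n μ
  apply hω
  intro i hi
  have hi' : i < k + 1 := by omega
  simp only [pact, hi', dite_true]
  rw [finRotate_of_lt hi]

lemma extd_eq (k : ℕ) (ω : Coeff D) (hω : Dep k ω) :
    extd k ω = wedge 1 k e ω - ((-1:ℝ)^k) • wedge k 1 ω e := by
  have h1 : wedge k 1 ω e = alt (k+1) ω := by
    rw [wedge_eq]; congr 1; funext n μ; simp [T, e]
  rw [h1, ← alt_shift k ω hω, wedge_eq, add_comm 1 k, ← alt_sub]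
  unfold extd
  congr 1
  funext n μ
  have : multiShift 1 n μ = shiftSite n (μ 0) := by
    funext x; simp only [multiShift, shiftSite, Finset.sum_range_one]
  simp [T, e, fdiff, this]

lemma e_e : wedge 1 1 (e : Coeff D) e = 0 := by
  have h := alt_shift 1 (e : Coeff D) (Dep_e 1)
  have h1 : wedge 1 1 (e : Coeff D) e = alt 2 e := by
    rw [wedge_eq]; congr 1; funext n μ; simp [T, e]
  rw [h1]
  have h2 : alt 2 (e : Coeff D) = ((-1:ℝ)^1) • alt 2 e := h
  funext n μ
  have := congrFun (congrFun h2 n) μ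
  simp at this ⊢
  linarith

lemma wedge_zero_left (k l : ℕ) (b : Coeff D) : wedge k l 0 b = 0 := by
  have := wedge_sub_left k l (0 : Coeff D) 0 b
  simpa using this

lemma wedge_zero_right (k l : ℕ) (b : Coeff D) : wedge k l b 0 = 0 := by
  have := wedge_sub_right k l b (0 : Coeff D) 0
  simpa using this

lemma curv_eq (A : Coeff D) (hA : Dep 1 A) : curv A = wedge 1 1 e A + wedge 1 1 A e := by
  rw [curv, extd_eq 1 A hA]; simp

lemma Dep_curv (A : Coeff D) (hA : Dep 1 A) : Dep 2 (curv A) := by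
  rw [curv_eq A hA]
  intro n μ ν h
  have h1 := Dep_wedge e A (Dep_e 1) hA (rfl : 2 = 1 + 1) n μ ν h
  have h2 := Dep_wedge A e hA (Dep_e 1) (rfl : 2 = 1 + 1) n μ ν h
  simp [h1, h2]

lemma curv_comm (A : Coeff D) (hA : Dep 1 A) : wedge 1 2 e (curv A) = wedge 2 1 (curv A) e := by
  rw [curv_eq A hA, wedge_add_left, wedge_add_right,
    ← wedge_assoc (kl := 2) (l := 1) (m := 1) (lm := 2) e e A (Dep_e 1) rfl rfl, e_e, wedge_zero_left,
    wedge_assoc (kl := 2) (l := 1) (m := 1) (lm := 2) A e e hA rfl rfl, e_e, wedge_zero_right,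
    wedge_assoc (kl := 2) (l := 1) (m := 1) (lm := 2) e A e (Dep_e 1) rfl rfl, add_zero, zero_add]

lemma Dep_wpow (F : Coeff D) (hF : Dep 2 F) (m : ℕ) : Dep (2*m) (wpow F m) := by
  induction m with
  | zero => exact fun _ _ _ _ => rfl
  | succ m ih => exact Dep_wedge F _ hF ih (by ring)

lemma one_wedge (l : ℕ) (b : Coeff D) : wedge 0 l (fun _ _ => 1) b = alt l b := by
  rw [wedge_eq, zero_add]; congr 1; funext n μ
  have : multiShift 0 n μ = n := by funext x; simp [multiShift]
  simp [T, this]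

lemma wedge_one (k : ℕ) (b : Coeff D) : wedge k 0 b (fun _ _ => 1) = alt k b := by
  rw [wedge_eq, add_zero]; congr 1; funext n μ; simp [T]

lemma alt_wpow (F : Coeff D) (m : ℕ) : alt (2*m) (wpow F m) = wpow F m := by
  cases m with
  | zero => funext n μ; simp [wpow, alt]
  | succ m =>
    have : 2 * (m+1) = 2 + 2 * m := by ring
    rw [this, wpow, wedge_eq, alt_alt]

lemma wpow_comm (F X : Coeff D) (hF : Dep 2 F) (p : ℕ) (hX : Dep p X)
    (h : wedge p 2 X F = wedge 2 p F X) (m : ℕ) :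
    wedge p (2*m) X (wpow F m) = wedge (2*m) p (wpow F m) X := by
  induction m with
  | zero => exact (wedge_one p X).trans (one_wedge p X).symm
  | succ m ih =>
    have h2 : 2 * (m+1) = 2 + 2 * m := by ring
    rw [h2]
    change wedge p (2 + 2*m) X (wedge 2 (2*m) F (wpow F m)) =
      wedge (2 + 2*m) p (wedge 2 (2*m) F (wpow F m)) X
    rw [← wedge_assoc (kl := p+2) X F _ hX rfl rfl, h,
      wedge_assoc (lm := 2*m+p) F X _ hF (by ring) (by ring), ih,
      wedge_assoc (lm := 2*m+p) F _ X hF (by ring) (by ring)]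

lemma extd_sum {ι : Type*} (k : ℕ) (s : Finset ι) (f : ι → Coeff D) :
    extd k (∑ i ∈ s, f i) = ∑ i ∈ s, extd k (f i) := by
  simp only [extd]
  rw [← alt_sum]
  congr 1
  funext n μ
  simp [fdiff, Finset.sum_apply]

lemma term (s m : ℕ) (hm : m ≤ s) (A₀ A₁ : Coeff D) (h₀ : Dep 1 A₀) (h₁ : Dep 1 A₁) :
    extd (2*s+1) (wedgeList [(2 * m, wpow (curv A₀) m), (1, A₁ - A₀),
                       (2 * (s - m), wpow (curv A₁) (s - m))])
    = wedge (2*m) (2*(s+1-m)) (wpow (curv A₀) m) (wpow (curv A₁) (s+1-m))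
      - wedge (2*(m+1)) (2*(s+1-(m+1))) (wpow (curv A₀) (m+1)) (wpow (curv A₁) (s+1-(m+1))) := by
  obtain ⟨q, rfl⟩ := Nat.exists_eq_add_of_le hm
  have e1 : m + q - m = q := by omega
  have e2 : m + q + 1 - m = q + 1 := by omega
  have e3 : m + q + 1 - (m + 1) = q := by omega
  rw [e1, e2, e3]
  have hη : Dep 1 (A₁ - A₀) := by
    intro n μ ν h; simp [h₀ n μ ν h, h₁ n μ ν h]
  have hF0 := Dep_curv A₀ h₀
  have hF1 := Dep_curv A₁ h₁
  have hP := Dep_wpow _ hF0 m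
  have hQ := Dep_wpow _ hF1 q
  have c0 := wpow_comm (curv A₀) e hF0 1 (Dep_e 1) (curv_comm A₀ h₀) m
  have c1 := wpow_comm (curv A₁) e hF1 1 (Dep_e 1) (curv_comm A₁ h₁) q
  have cF := wpow_comm (curv A₀) (curv A₀) hF0 2 hF0 rfl m
  have hd : wedge 1 1 e (A₁ - A₀) + wedge 1 1 (A₁ - A₀) e = curv A₁ - curv A₀ := by
    rw [curv_eq A₀ h₀, curv_eq A₁ h₁, wedge_sub_left, wedge_sub_right]; abel
  have w0 : wpow (curv A₀) (m+1) = wedge (2*m) 2 (wpow (curv A₀) m) (curv A₀) := by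
    rw [← cF]; rfl
  have w1 : wpow (curv A₁) (q+1) = wedge 2 (2*q) (curv A₁) (wpow (curv A₁) q) := rfl
  have hl : wedgeList [(2 * m, wpow (curv A₀) m), (1, A₁ - A₀), (2 * q, wpow (curv A₁) q)]
      = wedge (2*m) (1+2*q) (wpow (curv A₀) m) (wedge 1 (2*q) (A₁ - A₀) (wpow (curv A₁) q)) := by
    simp only [wedgeList, List.map_cons, List.map_nil, List.sum_cons, List.sum_nil, add_zero]
    rw [wedge_one, alt_wpow]
  rw [hl]
  generalize A₁ - A₀ = η at *
  generalize wpow (curv A₀) m = P at *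
  rw [w0, w1]
  generalize wpow (curv A₁) q = Q at *
  have hηQ : Dep (1+2*q) (wedge 1 (2*q) η Q) := Dep_wedge η Q hη hQ rfl
  rw [extd_eq _ _ (Dep_wedge _ _ hP hηQ (by ring))]
  have hs : (-1:ℝ)^(2*(m+q)+1) = -1 := by simp [pow_succ, pow_mul]
  rw [hs, neg_one_smul, sub_neg_eq_add,
    ← wedge_assoc (kl := 1 + 2*m) e P _ (Dep_e 1) rfl (by ring), c0,
    wedge_assoc (lm := 2 + 2*q) P e _ hP (by ring) (by ring),
    ← wedge_assoc (kl := 2) e η Q (Dep_e 1) rfl rfl,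
    wedge_assoc (lm := 2 + 2*q) P _ e hP (by ring) (by ring),
    wedge_assoc (lm := 1 + 2*q) η Q e hη (by ring) (by ring), ← c1,
    ← wedge_assoc (kl := 2) η e Q hη rfl rfl,
    ← wedge_add_right, ← wedge_add_left, hd, wedge_sub_left, wedge_sub_right,
    wedge_assoc (lm := 2 + 2*q) P (curv A₀) Q hP (by ring) (by ring)]
  congr 2
  ring

end LT

/-- **Lattice transgression formula** (case `k = 1` of the descent equations):
for lattice 1-forms `A₀, A₁` on `ℤ^D`, `F_i = dA_i`, `η^{1,0} = A₁ − A₀` and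
`r ≥ 1`, `F₁^r − F₀^r = d(Σ_{m=0}^{r−1} F₀^m ∧ η^{1,0} ∧ F₁^{r−1−m})`. -/
theorem lattice_transgression (D r : ℕ) (hr : 1 ≤ r) (A₀ A₁ : Coeff D)
    (h₀ : IsLatticeForm D 1 A₀) (h₁ : IsLatticeForm D 1 A₁) :
    wpow (curv A₁) r - wpow (curv A₀) r
      = extd (2 * r - 1)
          (∑ m ∈ Finset.range r,
            wedgeList [(2 * m, wpow (curv A₀) m), (1, A₁ - A₀),
                       (2 * (r - 1 - m), wpow (curv A₁) (r - 1 - m))]) := by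
  obtain ⟨s, rfl⟩ : ∃ s, r = s + 1 := ⟨r - 1, by omega⟩
  have e1 : 2 * (s + 1) - 1 = 2 * s + 1 := by omega
  rw [e1, Nat.add_sub_cancel, LT.extd_sum]
  rw [Finset.sum_congr rfl (fun m hm => LT.term s m
    (Nat.lt_succ_iff.1 (Finset.mem_range.1 hm)) A₀ A₁ h₀.1 h₁.1)]
  rw [Finset.sum_range_sub' (fun m => wedge (2*m) (2*(s+1-m)) (wpow (curv A₀) m)
    (wpow (curv A₁) (s+1-m)))]
  have a : wedge (2*0) (2*(s+1-0)) (wpow (curv A₀) 0) (wpow (curv A₁) (s+1-0))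
      = wpow (curv A₁) (s+1) :=
    (LT.one_wedge (2*(s+1)) _).trans (LT.alt_wpow _ _)
  have b : wedge (2*(s+1)) (2*(s+1-(s+1))) (wpow (curv A₀) (s+1)) (wpow (curv A₁) (s+1-(s+1)))
      = wpow (curv A₀) (s+1) := by
    rw [Nat.sub_self]
    exact (LT.wedge_one (2*(s+1)) _).trans (LT.alt_wpow _ _)
  rw [a, b]
end

section
/- Lattice Chern–Simons form for the second Chern class: Let A be a lattice 1-form on ℤ^D and F = dA its curvature 2-form. Then, with the noncommutative wedge product, F ∧ F = d(A ∧ F). -/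
open scoped BigOperators

theorem aux_step (n : ℕ) (F : Equiv.Perm (Fin (n+1)) → ℝ) :
    ∑ σ, F σ = ∑ p : Fin (n+1), ∑ τ : Equiv.Perm (Fin n),
      F (Equiv.Perm.decomposeFin.symm (p, τ)) := by
  rw [← Equiv.sum_comp Equiv.Perm.decomposeFin.symm, Fintype.sum_prod_type]

theorem aux_perm2 (g : Fin 2 → Fin 2 → ℝ) :
    ∑ σ : Equiv.Perm (Fin 2), ((Equiv.Perm.sign σ : ℤ) : ℝ) * g (σ 0) (σ 1) =
      g 0 1 - g 1 0 := by
  have h1 : (1 : Fin 2) = Fin.succ 0 := rfl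
  rw [aux_step, h1]
  simp only [Equiv.Perm.decomposeFin.symm_sign, Equiv.Perm.decomposeFin_symm_apply_zero,
    Equiv.Perm.decomposeFin_symm_apply_succ, Fin.sum_univ_two, Fintype.sum_unique]
  simp [Equiv.swap_apply_def]
  ring

theorem aux_perm3 (g : Fin 3 → Fin 3 → Fin 3 → ℝ) :
    ∑ σ : Equiv.Perm (Fin 3), ((Equiv.Perm.sign σ : ℤ) : ℝ) * g (σ 0) (σ 1) (σ 2) =
      g 0 1 2 - g 0 2 1 - g 1 0 2 + g 1 2 0 + g 2 0 1 - g 2 1 0 := by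
  have h2 : (2 : Fin 3) = Fin.succ 1 := rfl
  have h1 : (1 : Fin 3) = Fin.succ 0 := rfl
  have key : ∀ p : Fin 3, ∑ τ : Equiv.Perm (Fin 2),
      ((Equiv.Perm.sign (Equiv.Perm.decomposeFin.symm (p, τ)) : ℤ) : ℝ) *
        g (Equiv.Perm.decomposeFin.symm (p, τ) 0) (Equiv.Perm.decomposeFin.symm (p, τ) 1)
          (Equiv.Perm.decomposeFin.symm (p, τ) 2) =
      (if p = 0 then 1 else -1) * (g p (Equiv.swap 0 p 1) (Equiv.swap 0 p 2) -
        g p (Equiv.swap 0 p 2) (Equiv.swap 0 p 1)) := by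
    intro p
    have := aux_perm2 (fun i j => (if p = 0 then 1 else -1) *
      g p (Equiv.swap 0 p i.succ) (Equiv.swap 0 p j.succ))
    rw [mul_sub]
    refine Eq.trans ?_ this
    refine Finset.sum_congr rfl fun τ _ => ?_
    rw [h2, h1]
    simp only [Equiv.Perm.decomposeFin.symm_sign, Equiv.Perm.decomposeFin_symm_apply_zero,
      Equiv.Perm.decomposeFin_symm_apply_succ]
    split_ifs <;> simp
  refine (aux_step 2 _).trans ?_
  refine (Finset.sum_congr rfl fun p _ => key p).trans ?_
  refine (Fin.sum_univ_three _).trans ?_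
  simp [Equiv.swap_apply_def]
  ring

theorem aux_perm4 (g : Fin 4 → Fin 4 → Fin 4 → Fin 4 → ℝ) :
    ∑ σ : Equiv.Perm (Fin 4), ((Equiv.Perm.sign σ : ℤ) : ℝ) * g (σ 0) (σ 1) (σ 2) (σ 3) =
      (g 0 1 2 3 - g 0 1 3 2 - g 0 2 1 3 + g 0 2 3 1 + g 0 3 1 2 - g 0 3 2 1)
      - (g 1 0 2 3 - g 1 0 3 2 - g 1 2 0 3 + g 1 2 3 0 + g 1 3 0 2 - g 1 3 2 0)
      + (g 2 0 1 3 - g 2 0 3 1 - g 2 1 0 3 + g 2 1 3 0 + g 2 3 0 1 - g 2 3 1 0)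
      - (g 3 0 1 2 - g 3 0 2 1 - g 3 1 0 2 + g 3 1 2 0 + g 3 2 0 1 - g 3 2 1 0) := by
  have h3 : (3 : Fin 4) = Fin.succ 2 := rfl
  have h2 : (2 : Fin 4) = Fin.succ 1 := rfl
  have h1 : (1 : Fin 4) = Fin.succ 0 := rfl
  have key : ∀ p : Fin 4, ∑ τ : Equiv.Perm (Fin 3),
      ((Equiv.Perm.sign (Equiv.Perm.decomposeFin.symm (p, τ)) : ℤ) : ℝ) *
        g (Equiv.Perm.decomposeFin.symm (p, τ) 0) (Equiv.Perm.decomposeFin.symm (p, τ) 1)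
          (Equiv.Perm.decomposeFin.symm (p, τ) 2) (Equiv.Perm.decomposeFin.symm (p, τ) 3) =
      (if p = 0 then 1 else -1) * (
        g p (Equiv.swap 0 p 1) (Equiv.swap 0 p 2) (Equiv.swap 0 p 3)
        - g p (Equiv.swap 0 p 1) (Equiv.swap 0 p 3) (Equiv.swap 0 p 2)
        - g p (Equiv.swap 0 p 2) (Equiv.swap 0 p 1) (Equiv.swap 0 p 3)
        + g p (Equiv.swap 0 p 2) (Equiv.swap 0 p 3) (Equiv.swap 0 p 1)
        + g p (Equiv.swap 0 p 3) (Equiv.swap 0 p 1) (Equiv.swap 0 p 2)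
        - g p (Equiv.swap 0 p 3) (Equiv.swap 0 p 2) (Equiv.swap 0 p 1)) := by
    intro p
    have := aux_perm3 (fun i j k => (if p = 0 then 1 else -1) *
      g p (Equiv.swap 0 p i.succ) (Equiv.swap 0 p j.succ) (Equiv.swap 0 p k.succ))
    simp only [mul_sub, mul_add]
    refine Eq.trans ?_ this
    refine Finset.sum_congr rfl fun τ _ => ?_
    rw [h3, h2, h1]
    simp only [Equiv.Perm.decomposeFin.symm_sign, Equiv.Perm.decomposeFin_symm_apply_zero,
      Equiv.Perm.decomposeFin_symm_apply_succ]
    split_ifs <;> simp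
  refine (aux_step 3 _).trans ?_
  refine (Finset.sum_congr rfl fun p _ => key p).trans ?_
  refine (Fin.sum_univ_four _).trans ?_
  simp [Equiv.swap_apply_def]
  ring

theorem aux_curv {D : ℕ} (A : Coeff D) (f : Site D → Fin D → ℝ)
    (hf : ∀ n μ, A n μ = f n (μ 0)) (n : Site D) (μ : ℕ → Fin D) :
    curv A n μ = 2⁻¹ * ((f (n + Pi.single (μ 0) 1) (μ 1) - f n (μ 1))
      - (f (n + Pi.single (μ 1) 1) (μ 0) - f n (μ 0))) := by
  have hs : ∀ (m : Site D) i, shiftSite m i = m + Pi.single i 1 := by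
    intro m i; ext j; simp [shiftSite, Pi.single_apply]
  have := aux_perm2 (fun i j => f (n + Pi.single (μ i) 1) (μ j) - f n (μ j))
  simp only [curv, extd, alt, fdiff, hf, hs]
  simp at this ⊢
  exact this

theorem aux_wedge {D : ℕ} (A F : Coeff D) (f : Site D → Fin D → ℝ)
    (G : Site D → Fin D → Fin D → ℝ)
    (hf : ∀ n μ, A n μ = f n (μ 0)) (hF : ∀ n μ, F n μ = G n (μ 0) (μ 1))
    (hG : ∀ n i j, G n i j = - G n j i)
    (n : Site D) (μ : ℕ → Fin D) :
    wedge 1 2 A F n μ = 3⁻¹ * (f n (μ 0) * G (n + Pi.single (μ 0) 1) (μ 1) (μ 2)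
      - f n (μ 1) * G (n + Pi.single (μ 1) 1) (μ 0) (μ 2)
      + f n (μ 2) * G (n + Pi.single (μ 2) 1) (μ 0) (μ 1)) := by
  have hs : ∀ (m : Site D) (ν : ℕ → Fin D), multiShift 1 m ν = m + Pi.single (ν 0) 1 := by
    intro m i; ext j; simp [multiShift, Pi.single_apply, -Finset.sum_boole]
  have := aux_perm3 (fun i j k => f n (μ i) * G (n + Pi.single (μ i) 1) (μ j) (μ k))
  simp only [wedge, alt, hf, hF, hs]
  have e : (1 + 2 : ℕ) = 3 := rfl
  simp [Nat.factorial] at this ⊢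
  refine (congrArg (fun x => (6:ℝ)⁻¹ * x) this).trans ?_
  rw [hG _ (μ 2) (μ 1), hG _ (μ 2) (μ 0), hG _ (μ 1) (μ 0)]
  ring

set_option maxHeartbeats 4000000 in
theorem aux_main (D : ℕ) (A : Coeff D) (hA : IsLatticeForm D 1 A) :
    wedge 2 2 (curv A) (curv A) = extd 3 (wedge 1 2 A (curv A)) := by
  obtain ⟨f, hf⟩ : ∃ f : Site D → Fin D → ℝ, ∀ n μ, A n μ = f n (μ 0) :=
    ⟨fun n i => A n (fun _ => i), fun n μ => hA.1 _ _ _ (by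
      intro i hi; obtain rfl : i = 0 := by omega
      rfl)⟩
  obtain ⟨G, hGd⟩ : ∃ G : Site D → Fin D → Fin D → ℝ, ∀ n i j, G n i j =
    2⁻¹ * ((f (n + Pi.single i 1) j - f n j) - (f (n + Pi.single j 1) i - f n i)) :=
    ⟨_, fun _ _ _ => rfl⟩
  have hF : ∀ n μ, curv A n μ = G n (μ 0) (μ 1) := fun n μ => by
    rw [hGd, aux_curv A f hf]
  have hG : ∀ n i j, G n i j = - G n j i := fun n i j => by rw [hGd, hGd]; ring
  have hW := aux_wedge A (curv A) f G hf hF hG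
  have hs : ∀ (m : Site D) i, shiftSite m i = m + Pi.single i 1 := by
    intro m i; ext j; simp [shiftSite, Pi.single_apply]
  have hs2 : ∀ (m : Site D) (ν : ℕ → Fin D), multiShift 2 m ν =
      m + Pi.single (ν 0) 1 + Pi.single (ν 1) 1 := by
    intro m i; ext j; simp [multiShift, Pi.single_apply, Finset.sum_range_succ, add_assoc, -Finset.sum_boole]
  funext n μ
  have h1 := aux_perm4 (fun i j k l => G n (μ i) (μ j) *
    G (n + Pi.single (μ i) 1 + Pi.single (μ j) 1) (μ k) (μ l))
  have h2 := aux_perm4 (fun i j k l => 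
    3⁻¹ * (f (n + Pi.single (μ i) 1) (μ j) * G (n + Pi.single (μ i) 1 + Pi.single (μ j) 1) (μ k) (μ l)
      - f (n + Pi.single (μ i) 1) (μ k) * G (n + Pi.single (μ i) 1 + Pi.single (μ k) 1) (μ j) (μ l)
      + f (n + Pi.single (μ i) 1) (μ l) * G (n + Pi.single (μ i) 1 + Pi.single (μ l) 1) (μ j) (μ k))
    - 3⁻¹ * (f n (μ j) * G (n + Pi.single (μ j) 1) (μ k) (μ l)
      - f n (μ k) * G (n + Pi.single (μ k) 1) (μ j) (μ l)
      + f n (μ l) * G (n + Pi.single (μ l) 1) (μ j) (μ k)))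
  refine Eq.trans (Eq.trans ?_ (congrArg (fun x => (24:ℝ)⁻¹ * x) h1))
    (Eq.trans ?_ ((congrArg (fun x => (24:ℝ)⁻¹ * x) h2.symm).trans ?_))
  · simp only [wedge, alt, hF, hs2]
    refine congrArg₂ (· * ·) (by norm_num [Nat.factorial]) ?_
    rfl
  rotate_left
  · simp only [extd, alt, fdiff, hW, hs]
    refine congrArg₂ (· * ·) (by norm_num [Nat.factorial]) ?_
    rfl
  clear h1 h2 hW hF hs hs2
  refine congrArg _ ?_
  have c0 : ((0 : Fin 4) : ℕ) = 0 := rfl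
  have c1 : ((1 : Fin 4) : ℕ) = 1 := rfl
  have c2 : ((2 : Fin 4) : ℕ) = 2 := rfl
  have c3 : ((3 : Fin 4) : ℕ) = 3 := rfl
  simp only [c0, c1, c2, c3]
  generalize μ 0 = a
  generalize μ 1 = b
  generalize μ 2 = c
  generalize μ 3 = d
  have q : ∀ (i j : Fin D), n + Pi.single i 1 + Pi.single j 1 = n + Pi.single j 1 + Pi.single i 1 :=
    fun i j => add_right_comm _ _ _
  simp only [q b a, q c a, q d a, q c b, q d b, q d c, hG _ b a, hG _ c a, hG _ d a, hG _ c b,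
    hG _ d b, hG _ d c]
  simp only [hGd, q b a, q c a, q d a, q c b, q d b, q d c]
  ring

/-- **Lattice Chern–Simons form for the second Chern class.** For a lattice
1-form `A` on `ℤ^D` with curvature `F = dA`, with the noncommutative wedge
product, `F ∧ F = d(A ∧ F)`. -/
theorem lattice_chern_simons (D : ℕ) (A : Coeff D) (hA : IsLatticeForm D 1 A) :
    wedge 2 2 (curv A) (curv A) = extd 3 (wedge 1 2 A (curv A)) := by
  exact aux_main D A hA
end
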